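/- arXiv:2211.15602 — 2 statements merged into one kernel-verified Lean document; each statement's English description precedes it below -/
import Mathlib

section
/- Any run of a policy iteration algorithm with arbitrary action selection on an n-state, k-action DMDP (n ≥ 2, k ≥ 2) terminates in at most 5·n³·k²·α(k)^(n−1) steps, where α(k) = (k − 1 + √((k−1)² + 4))/2. Equivalently, every sequence of policies π_1 ≺ π_2 ≺ … ≺ π_ℓ in which each π_{i+1} is obtained from π_i by policy improvement with arbitrary action selection satisfies ℓ ≤ 5·n³·k²·α(k)^(n−1). -/
open scoped Classical
open Finset

/-- Number of directed cycles in a finite directed multigraph on `Fin n`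
specified by the edge-multiplicity function `G`: self-loops are cycles of
length 1, cycles of length `≥ 2` correspond to cyclic permutations, parallel
edges give distinct cycles, and cycles are counted up to cyclic rotation. -/
noncomputable def cycleCount (n : ℕ) (G : Fin n → Fin n → ℕ) : ℕ :=
  (∑ v, G v v) +
  ∑ σ : Equiv.Perm (Fin n), if σ.IsCycle then ∏ v ∈ σ.support, G v (σ v) else 0

/-- Number of path-cycle subgraphs of a finite directed multigraph with
multiplicity function `G`: a path-cycle subgraph is given by a nonempty
vertex set `s` together with a successor map `f` on `s` (extended by the
identity off `s`) whose functional digraph on `s` is weakly connected and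
has at most one source (vertex of indegree zero); parallel edges give
distinct path-cycles. -/
noncomputable def pathCycleCount {V : Type*} [Fintype V] [DecidableEq V]
    (G : V → V → ℕ) : ℕ :=
  ∑ s : Finset V, ∑ f : V → V,
    if s.Nonempty ∧ (∀ v, v ∉ s → f v = v) ∧ (∀ v ∈ s, f v ∈ s) ∧
        (∀ u ∈ s, ∀ v ∈ s,
          Relation.ReflTransGen (fun a b => (a ∈ s ∧ f a = b) ∨ (b ∈ s ∧ f b = a)) u v) ∧
        (s.filter fun v => ∀ u ∈ s, f u ≠ v).card ≤ 1
    then ∏ v ∈ s, G v (f v) else 0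

/-- `α(k) = (k - 1 + √((k-1)² + 4)) / 2`. -/
noncomputable def alphaK (k : ℕ) : ℝ :=
  ((k : ℝ) - 1 + Real.sqrt (((k : ℝ) - 1) ^ 2 + 4)) / 2

/-- Multiplicity function of the digraph `G_{n,k}`: on vertices `Fin n`,
edges `(i, i+1 mod n)` have multiplicity `k - 1` and edges `(i, i+2 mod n)`
have multiplicity `1`. -/
def GnkMult (n k : ℕ) : Fin n → Fin n → ℕ := fun i j =>
  if (j.val + n - i.val) % n = 1 then k - 1
  else if (j.val + n - i.val) % n = 2 then 1
  else 0

/-- Multiplicity function of the digraph `G'_{n,k}`: on vertices `Fin n`,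
edges `(i, i+1 mod n)` have multiplicity `1` and edges `(i, i+2 mod n)`
have multiplicity `k - 1`. -/
def Gnk'Mult (n k : ℕ) : Fin n → Fin n → ℕ := fun i j =>
  if (j.val + n - i.val) % n = 1 then 1
  else if (j.val + n - i.val) % n = 2 then k - 1
  else 0

/-- Edge relation of the simple digraph `G_m`: `(i, j)` is an edge whenever
`j - i ≡ 1 (mod m)` or `j - i ≡ 2 (mod m)`. -/
def GmRel (m : ℕ) : Fin m → Fin m → Prop := fun i j =>
  (j.val + m - i.val) % m = 1 ∨ (j.val + m - i.val) % m = 2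

/-- The sequence `S_m` with `S_0 = 1`, `S_1 = k - 1`,
`S_m = (k-1) S_{m-1} + S_{m-2}`. -/
def Sseq (k : ℕ) : ℕ → ℕ
  | 0 => 1
  | 1 => k - 1
  | (m + 2) => (k - 1) * Sseq k (m + 1) + Sseq k m

/-- `F_k(n)`: the maximum number of directed cycles over all digraphs on `n`
vertices with every outdegree exactly `k` in which every multi-edge between
distinct vertices has multiplicity at most `k - 1`. -/
noncomputable def Fk (k n : ℕ) : ℕ :=
  sSup {c : ℕ | ∃ G : Fin n → Fin n → ℕ,
    (∀ v, (∑ u, G v u) = k) ∧ (∀ u v : Fin n, u ≠ v → G u v ≤ k - 1) ∧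
    c = cycleCount n G}

/-- Weak connectivity (same connected component) in a directed multigraph. -/
def MConn {n : ℕ} (G : Fin n → Fin n → ℕ) : Fin n → Fin n → Prop :=
  Relation.ReflTransGen (fun a b => 0 < G a b ∨ 0 < G b a)

/-- A deterministic Markov decision problem with state space `S`, action
space `A` (all actions available at every state), deterministic transition
function `T`, reward function `R` and discount factor `gamma ∈ [0, 1)`. -/
structure DMDP (S A : Type*) where
  T : S → A → S
  R : S → A → ℝ
  gamma : ℝ
  gamma_nonneg : 0 ≤ gamma
  gamma_lt_one : gamma < 1

namespace DMDP

variable {S A : Type*}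

/-- The trajectory of states obtained by following policy `π` from `s`. -/
def traj (M : DMDP S A) (π : S → A) (s : S) (t : ℕ) : S :=
  (fun x => M.T x (π x))^[t] s

/-- The value function `V^π(s) = Σ_t γ^t R(s_t, π(s_t))`. -/
noncomputable def V (M : DMDP S A) (π : S → A) (s : S) : ℝ :=
  ∑' t : ℕ, M.gamma ^ t * M.R (M.traj π s t) (π (M.traj π s t))

/-- The action value function `Q^π(s, a) = R(s, a) + γ V^π(T(s, a))`. -/
noncomputable def Q (M : DMDP S A) (π : S → A) (s : S) (a : A) : ℝ :=
  M.R s a + M.gamma * M.V π (M.T s a)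

/-- `π ≺ π'`: pointwise `V^π ≤ V^{π'}` with strict inequality somewhere. -/
def PLt (M : DMDP S A) (π π' : S → A) : Prop :=
  (∀ s, M.V π s ≤ M.V π' s) ∧ ∃ s, M.V π s < M.V π' s

/-- `π'` is obtained from `π` by policy improvement with arbitrary action
selection. -/
def ImpStep (M : DMDP S A) (π π' : S → A) : Prop :=
  π' ≠ π ∧ ∀ s, π' s ≠ π s → M.V π s < M.Q π s (π' s)

/-- `π'` is obtained from `π` by policy improvement with max-gain action
selection. -/
def MaxGainStep (M : DMDP S A) (π π' : S → A) : Prop :=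
  π' ≠ π ∧ ∀ s, π' s ≠ π s →
    M.V π s < M.Q π s (π' s) ∧
    ∀ a, M.V π s < M.Q π s a → M.Q π s a ≤ M.Q π s (π' s)

/-- The first time step at which a previously visited state recurs on the
trajectory of `π` from `s`. -/
noncomputable def pcLen (M : DMDP S A) (π : S → A) (s : S) : ℕ :=
  sInf {t : ℕ | ∃ t' < t, M.traj π s t' = M.traj π s t}

/-- The path-cycle `P^π_s`: the sequence of state–action–state triples
`(s_t, π(s_t), s_{t+1})` for `t` up to (but excluding) the first recurrence
of a previously visited state. -/
noncomputable def pathCycle (M : DMDP S A) (π : S → A) (s : S) : List (S × A × S) :=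
  (List.range (M.pcLen π s)).map fun t =>
    (M.traj π s t, π (M.traj π s t), M.traj π s (t + 1))

/-- The multiplicity function of the DMDP digraph `G_M`: one edge from `s`
to `T(s, a)` for every action `a`. -/
noncomputable def digraph (M : DMDP S A) [Fintype A] : S → S → ℕ :=
  fun s s' => (Finset.univ.filter fun a => M.T s a = s').card

/-- A state is non-branching if all actions lead to the same next state. -/
def NonBranching (M : DMDP S A) (s : S) : Prop := ∃ s', ∀ a, M.T s a = s'

/-- The relation `∼` on path-cycles: same sequence of states, and wherever
the actions differ the state is non-branching. -/
def PCSim (M : DMDP S A) (P₁ P₂ : List (S × A × S)) : Prop :=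
  P₁.length = P₂.length ∧
  ∀ (t : ℕ) (h₁ : t < P₁.length) (h₂ : t < P₂.length),
    (P₁.get ⟨t, h₁⟩).1 = (P₂.get ⟨t, h₂⟩).1 ∧
    (P₁.get ⟨t, h₁⟩).2.2 = (P₂.get ⟨t, h₂⟩).2.2 ∧
    ((P₁.get ⟨t, h₁⟩).2.1 ≠ (P₂.get ⟨t, h₂⟩).2.1 → M.NonBranching (P₁.get ⟨t, h₁⟩).1)

/-- The relation `≈` on path-cycles: they differ only in equivalent edges,
i.e. have the same sequences of source and target states. -/
def PCApprox (_M : DMDP S A) (P₁ P₂ : List (S × A × S)) : Prop :=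
  P₁.length = P₂.length ∧
  ∀ (t : ℕ) (h₁ : t < P₁.length) (h₂ : t < P₂.length),
    (P₁.get ⟨t, h₁⟩).1 = (P₂.get ⟨t, h₂⟩).1 ∧
    (P₁.get ⟨t, h₁⟩).2.2 = (P₂.get ⟨t, h₂⟩).2.2

end DMDP

section PathSum

variable {S : Type*}

/-- Total weight of the simple paths from `u` to `t` whose vertices after `u` lie in `V`;
the first argument bounds the number of edges. -/
noncomputable def pathSum (t : S) (w : S → S → ℝ) : ℕ → Finset S → S → ℝ
  | 0, _, u => if u = t then 1 else 0
  | m + 1, V, u =>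
    if u = t then 1 else ∑ v ∈ V, w u v * pathSum t w m (V.erase v) v

theorem pathSum_self (t : S) (w : S → S → ℝ) (m : ℕ) (V : Finset S) :
    pathSum t w m V t = 1 := by
  cases m <;> simp [pathSum]

theorem pathSum_succ {t u : S} (h : u ≠ t) (w : S → S → ℝ) (m : ℕ) (V : Finset S) :
    pathSum t w (m + 1) V u = ∑ v ∈ V, w u v * pathSum t w m (V.erase v) v := by
  simp [pathSum, h]

theorem pathSum_zero {t u : S} (h : u ≠ t) (w : S → S → ℝ) (V : Finset S) :
    pathSum t w 0 V u = 0 := by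
  simp [pathSum, h]

theorem pathSum_nonneg {t : S} {w : S → S → ℝ} (hw : ∀ u v, 0 ≤ w u v) (m : ℕ) :
    ∀ (V : Finset S) (u : S), 0 ≤ pathSum t w m V u := by
  induction m with
  | zero => intro V u; simp only [pathSum]; split_ifs <;> norm_num
  | succ m ih =>
    intro V u
    simp only [pathSum]
    split_ifs
    · norm_num
    · exact Finset.sum_nonneg fun v _ => mul_nonneg (hw u v) (ih _ _)

theorem pathSum_mono_weight {t : S} {w w' : S → S → ℝ} (hw : ∀ u v, 0 ≤ w u v)
    (hle : ∀ u v, w u v ≤ w' u v) (m : ℕ) :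
    ∀ (V : Finset S) (u : S), pathSum t w m V u ≤ pathSum t w' m V u := by
  induction m with
  | zero => intro V u; simp [pathSum]
  | succ m ih =>
    intro V u
    simp only [pathSum]
    split_ifs
    · exact le_rfl
    · exact Finset.sum_le_sum fun v _ => mul_le_mul (hle u v) (ih _ _)
        (pathSum_nonneg hw m _ _) ((hw u v).trans (hle u v))

theorem pathSum_mono_fuel {t : S} {w : S → S → ℝ} (hw : ∀ u v, 0 ≤ w u v) (m : ℕ) :
    ∀ (V : Finset S) (u : S), pathSum t w m V u ≤ pathSum t w (m + 1) V u := by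
  induction m with
  | zero =>
    intro V u
    by_cases h : u = t
    · subst h; simp [pathSum_self]
    · rw [pathSum_zero h]; exact pathSum_nonneg hw _ _ _
  | succ m ih =>
    intro V u
    by_cases h : u = t
    · subst h; simp [pathSum_self]
    · rw [pathSum_succ h, pathSum_succ h]
      exact Finset.sum_le_sum fun v _ => mul_le_mul_of_nonneg_left (ih _ _) (hw u v)

theorem pathSum_congr {t : S} {w w' : S → S → ℝ} (m : ℕ) :
    ∀ (V : Finset S) (u : S), u ∉ V → (∀ z ∈ insert u V, ∀ v ∈ V, v ≠ z → w z v = w' z v) →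
      pathSum t w m V u = pathSum t w' m V u := by
  induction m with
  | zero => intro V u _ _; simp [pathSum]
  | succ m ih =>
    intro V u hu hz
    simp only [pathSum]
    split_ifs
    · rfl
    · refine Finset.sum_congr rfl fun v hv => ?_
      rw [hz u (mem_insert_self _ _) v hv (fun h => hu (h ▸ hv)), ih _ _ (notMem_erase v V)]
      intro z hz' y hy
      rw [insert_erase hv] at hz'
      exact hz z (mem_insert_of_mem hz') y (mem_of_mem_erase hy)

/-- Splitting paths by the edge through which they enter `x`; a path entering `x` from `z` is a
path avoiding `x` in the graph where the row of `z` is replaced by the row of `x`. -/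
theorem pathSum_le_contract_sub {t x : S} {w : S → S → ℝ} (hw : ∀ u v, 0 ≤ w u v) (hxt : x ≠ t)
    (m : ℕ) : ∀ (V : Finset S) (u : S), u ∉ V → x ∈ V →
      pathSum t w m V u ≤ pathSum t w m (V.erase x) u +
        ∑ z ∈ (insert u (V.erase x)).erase t,
          w z x * (pathSum t (Function.update w z (w x)) m (V.erase x) u -
            pathSum t (Function.update w z 0) m (V.erase x) u) := by
  induction m with
  | zero =>
    intro V u _ _
    simp [pathSum]
  | succ m ih =>
    intro V u hu hx
    by_cases hut : u = t
    · subst hut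
      simp [pathSum_self]
    have hux : u ∉ V.erase x := fun h => hu (mem_of_mem_erase h)
    rw [erase_insert_of_ne hut]
    rw [sum_insert (fun h => hux (mem_of_mem_erase h))]
    rw [pathSum_succ hut, pathSum_succ hut, ← add_sum_erase V _ hx]
    have hmain : ∑ v ∈ V.erase x, w u v * pathSum t w m (V.erase v) v ≤
        ∑ v ∈ V.erase x, w u v * pathSum t w m ((V.erase x).erase v) v +
        ∑ z ∈ (V.erase x).erase t,
          w z x * (pathSum t (Function.update w z (w x)) (m + 1) (V.erase x) u -
            pathSum t (Function.update w z 0) (m + 1) (V.erase x) u) := by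
      have : ∀ z ∈ (V.erase x).erase t,
          w z x * (pathSum t (Function.update w z (w x)) (m + 1) (V.erase x) u -
            pathSum t (Function.update w z 0) (m + 1) (V.erase x) u) =
          ∑ v ∈ V.erase x, w u v * (w z x *
            (pathSum t (Function.update w z (w x)) m ((V.erase x).erase v) v -
              pathSum t (Function.update w z 0) m ((V.erase x).erase v) v)) := by
        intro z hz
        rw [pathSum_succ hut, pathSum_succ hut, ← sum_sub_distrib, mul_sum]
        refine sum_congr rfl fun v _ => ?_
        have : u ≠ z := fun h => hux (h ▸ mem_of_mem_erase hz)
        rw [Function.update_of_ne this, Function.update_of_ne this]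
        ring
      rw [sum_congr rfl this, sum_comm, ← sum_add_distrib]
      refine sum_le_sum fun v hv => ?_
      rw [← mul_sum, ← mul_add]
      refine mul_le_mul_of_nonneg_left ?_ (hw u v)
      have hvV := mem_of_mem_erase hv
      have hvx := ne_of_mem_erase hv
      have := ih (V.erase v) v (notMem_erase v V) (mem_erase.2 ⟨hvx.symm, hx⟩)
      rw [erase_right_comm, insert_erase hv] at this
      exact this
    have hzero : pathSum t (Function.update w u 0) (m + 1) (V.erase x) u = 0 := by
      rw [pathSum_succ hut]; simp
    have hfst : w u x * pathSum t w m (V.erase x) x ≤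
        w u x * (pathSum t (Function.update w u (w x)) (m + 1) (V.erase x) u -
          pathSum t (Function.update w u 0) (m + 1) (V.erase x) u) := by
      rw [hzero, sub_zero]
      refine mul_le_mul_of_nonneg_left ?_ (hw _ _)
      refine (pathSum_mono_fuel hw m _ _).trans (le_of_eq ?_)
      rw [pathSum_succ hut, pathSum_succ hxt]
      refine sum_congr rfl fun v hv => ?_
      rw [Function.update_self]
      congr 1
      refine pathSum_congr m _ _ (notMem_erase _ _) fun z hz _ _ _ => ?_
      rw [insert_erase hv] at hz
      rw [Function.update_of_ne (show z ≠ u from fun h => hux (h ▸ hz))]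
    linarith

theorem pathSum_le_contract {t x : S} {w : S → S → ℝ} (hw : ∀ u v, 0 ≤ w u v) (hxt : x ≠ t)
    (m : ℕ) (V : Finset S) (u : S) (hu : u ∉ V) (hx : x ∈ V) :
      pathSum t w m V u ≤ pathSum t w m (V.erase x) u +
        ∑ z ∈ (insert u (V.erase x)).erase t,
          w z x * pathSum t (Function.update w z (w x)) m (V.erase x) u := by
  refine (pathSum_le_contract_sub hw hxt m V u hu hx).trans ?_
  gcongr with z
  · exact hw _ _
  · have : 0 ≤ pathSum t (Function.update w z 0) m (V.erase x) u :=
      pathSum_nonneg (fun y v => by by_cases h : y = z <;> simp [h, hw]) _ _ _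
    linarith

/-- If `x` can only be entered from `z`, and `z` leads only to `x`, then the two may be merged. -/
theorem pathSum_le_merge {t x z : S} {w : S → S → ℝ} (hw : ∀ u v, 0 ≤ w u v) (hxt : x ≠ t)
    (m : ℕ) (V : Finset S) (u : S) (hu : u ∉ V) (hx : x ∈ V)
    (hz : z ∈ (insert u (V.erase x)).erase t) (hzx : w z x = 1)
    (hne : ∀ y ∈ (insert u (V.erase x)).erase t, y ≠ z → w y x = 0)
    (hz0 : ∀ v ∈ V.erase x, v ≠ z → w z v = 0) :
    pathSum t w m V u ≤ pathSum t (Function.update w z (w x)) m (V.erase x) u := by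
  refine (pathSum_le_contract_sub hw hxt m V u hu hx).trans ?_
  rw [sum_eq_single z (fun y hy hyz => by rw [hne y hy hyz, zero_mul]) (fun h => absurd hz h),
    hzx, one_mul]
  have : pathSum t (Function.update w z 0) m (V.erase x) u = pathSum t w m (V.erase x) u := by
    refine pathSum_congr m _ _ (fun h => hu (mem_of_mem_erase h)) fun y _ v hv hvy => ?_
    by_cases h : y = z
    · subst h; simp [hz0 v hv hvy]
    · rw [Function.update_of_ne h]
  linarith

/-- A path sum is an affine function of every single row of the weight matrix. -/
theorem pathSum_update_affine (t : S) (w : S → S → ℝ) (z : S) [Fintype S] (m : ℕ) :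
    ∀ (V : Finset S) (u : S), u ∉ V → ∃ (c : ℝ) (g : S → ℝ), ∀ r : S → ℝ,
      pathSum t (Function.update w z r) m V u = c + ∑ v, r v * g v := by
  induction m with
  | zero => intro V u _; exact ⟨if u = t then 1 else 0, 0, by simp [pathSum]⟩
  | succ m ih =>
    intro V u hu
    by_cases hut : u = t
    · subst hut; exact ⟨1, 0, by simp [pathSum_self]⟩
    by_cases huz : u = z
    · subst huz
      refine ⟨0, fun v => if v ∈ V then pathSum t w m (V.erase v) v else 0, fun r => ?_⟩
      rw [pathSum_succ hut, zero_add, ← sum_filter_add_sum_filter_not univ (fun v => v ∈ V)]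
      rw [sum_eq_zero (s := univ.filter fun v => v ∉ V)
        (fun v hv => by simp [(mem_filter.1 hv).2]), add_zero, filter_mem_eq_inter, univ_inter]
      refine sum_congr rfl fun v hv => ?_
      simp only [Function.update_self, if_pos hv]
      congr 1
      refine pathSum_congr m _ _ (notMem_erase _ _) fun y hy _ _ _ => ?_
      rw [insert_erase hv] at hy
      rw [Function.update_of_ne (show y ≠ u from fun h => hu (h ▸ hy))]
    · choose! c g hcg using fun v : S => ih (V.erase v) v (notMem_erase v V)
      refine ⟨∑ v ∈ V, w u v * c v, fun x => ∑ v ∈ V, w u v * g v x, fun r => ?_⟩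
      rw [pathSum_succ hut]
      simp_rw [hcg, Function.update_of_ne huz, mul_add, sum_add_distrib, mul_sum]
      congr 1
      rw [sum_comm]
      exact sum_congr rfl fun _ _ => sum_congr rfl fun _ _ => by ring

end PathSum

section Growth

/-- `α` is the positive root of `x ^ 2 = a * x + 1`. -/
structure Growth (a α : ℝ) : Prop where
  one_le : 1 ≤ a
  pos : 0 < α
  sq : α ^ 2 = a * α + 1

namespace Growth

variable {a α : ℝ} (g : Growth a α)
include g

theorem lt : a < α := by
  have := g.one_le; have := g.pos; have := g.sq
  by_contra! h
  nlinarith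

theorem lower : a ^ 3 + 2 * a ≤ (a ^ 2 + 1) * α := by
  have := g.one_le; have := g.pos; have h2 := g.sq; have := g.lt
  have h3 : (a ^ 2 + 1) * α * (α - a) = a ^ 2 + 1 := by linear_combination (a ^ 2 + 1) * h2
  by_contra! h
  have h4 : (a ^ 2 + 1) * (α - a) < a := by nlinarith
  have h5 : (a ^ 2 + 1) * α * ((a ^ 2 + 1) * (α - a)) < (a ^ 3 + 2 * a) * a := by
    apply mul_lt_mul'' h h4 <;> nlinarith
  nlinarith

theorem lower' : a ^ 2 + a + 1 ≤ (a + 1) * α := by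
  have := g.one_le; have := g.pos; have h2 := g.sq; have := g.lt
  by_contra! h
  have h4 : (a + 1) * (α - a) < 1 := by nlinarith
  nlinarith

theorem upper : a * α ≤ a ^ 2 + 1 := by
  have := g.one_le; have := g.pos; have := g.sq; have := g.lt
  nlinarith

theorem cube : α ^ 3 = (a ^ 2 + 1) * α + a := by
  linear_combination (α + a) * g.sq

theorem a_pos : 0 < a := by linarith [g.one_le]

end Growth

theorem pow_mul_affine_le {ρ X Y : ℝ} (hρ0 : 0 ≤ ρ) (hρ : ρ ≤ 1) (hY : 0 ≤ Y)
    (h : ρ * (X + 2 * Y) ≤ X + Y) (q : ℕ) : ρ ^ q * (X + (q + 1) * Y) ≤ X + Y := by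
  induction q with
  | zero => simp
  | succ q ih =>
    have h1 : ρ * (X + (q + 2) * Y) ≤ X + (q + 1) * Y := by
      have : ρ * (q * Y) ≤ 1 * (q * Y) := mul_le_mul_of_nonneg_right hρ (by positivity)
      nlinarith
    calc ρ ^ (q + 1) * (X + ((q + 1 : ℕ) + 1) * Y) = ρ ^ q * (ρ * (X + (q + 2) * Y)) := by
          push_cast; ring
      _ ≤ ρ ^ q * (X + (q + 1) * Y) := mul_le_mul_of_nonneg_left h1 (by positivity)
      _ ≤ X + Y := ih

theorem bernoulli_bound {ρ X Y Z : ℝ} (hρ0 : 0 ≤ ρ) (hρ : ρ ≤ 1) (hY : 0 ≤ Y)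
    (h : ρ * (X + 2 * Y) ≤ X + Y) (h1 : ρ * (X + Y) ≤ Z) {q : ℕ} (hq : 1 ≤ q) :
    ρ ^ q * (X + q * Y) ≤ Z := by
  obtain ⟨q, rfl⟩ := Nat.exists_eq_add_of_le' hq
  have := mul_le_mul_of_nonneg_left (pow_mul_affine_le hρ0 hρ hY h q) hρ0
  calc ρ ^ (q + 1) * (X + ((q + 1 : ℕ) : ℝ) * Y) = ρ * (ρ ^ q * (X + (q + 1) * Y)) := by
        push_cast; ring
    _ ≤ _ := this.trans h1

/-- Bound for a state with only its heavy edge available. -/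
noncomputable def cH (a α : ℝ) : ℝ := (a ^ 2 + 1) / α
/-- Bound for a state with only its light edge available. -/
noncomputable def cL (a α : ℝ) : ℝ := (a + 1) / α
/-- Loss ratio when a light edge disappears. -/
noncomputable def rL (a α : ℝ) : ℝ := (a ^ 2 + 1) / α ^ 2
/-- Loss ratio when a heavy edge disappears. -/
noncomputable def rH (a α : ℝ) : ℝ := (a + 1) / α ^ 2

namespace Growth

variable {a α : ℝ} (g : Growth a α)
include g

theorem mul_cH : α * cH a α = a ^ 2 + 1 := by
  have := g.pos; unfold cH; field_simp

theorem mul_cL : α * cL a α = a + 1 := by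
  have := g.pos; unfold cL; field_simp

theorem mul_rL : α * rL a α = cH a α := by
  have := g.pos; unfold cH rL; field_simp

theorem mul_rH : α * rH a α = cL a α := by
  have := g.pos; unfold cL rH; field_simp

theorem one_le_cL : 1 ≤ cL a α := by
  have := g.pos; have := g.one_le; have := g.upper
  unfold cL
  rw [le_div_iff₀ g.pos]; nlinarith

theorem cL_le_cH : cL a α ≤ cH a α := by
  have := g.pos; have := g.one_le
  unfold cL cH
  gcongr; nlinarith

theorem cH_le : cH a α ≤ α := by
  have := g.pos; have := g.one_le; have := g.lt; have := g.sq
  unfold cH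
  rw [div_le_iff₀ g.pos]; nlinarith

theorem cL_le_two : cL a α ≤ 2 := by
  have := g.pos; have := g.one_le; have := g.lt
  unfold cL
  rw [div_le_iff₀ g.pos]; nlinarith

theorem one_lt : 1 < α := g.one_le.trans_lt g.lt

theorem rL_pos : 0 < rL a α := by
  have := g.pos; unfold rL; positivity

theorem rL_le_one : rL a α ≤ 1 := by
  have := g.pos; have := g.mul_rL; have := g.cH_le
  nlinarith

theorem rH_le_rL : rH a α ≤ rL a α := by
  have := g.pos; have := g.mul_rL; have := g.mul_rH; have := g.cL_le_cH
  nlinarith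

/-- `1 ≤ rL * cL` if `2 ≤ a` -/
theorem one_le_rL_mul_cL (h : 2 ≤ a) : 1 ≤ rL a α * cL a α := by
  have := g.pos; have := g.cube; have := g.upper
  unfold rL cL
  rw [div_mul_div_comm, le_div_iff₀ (by positivity)]
  nlinarith

theorem one_le_rH_mul_cH (h : 2 ≤ a) : 1 ≤ rH a α * cH a α := by
  refine (g.one_le_rL_mul_cL h).trans_eq ?_
  unfold rH cH rL cL; ring

theorem heavy_bound : a * rL a α + rH a α ≤ α := by
  have := g.pos; have h3 := g.cube; have := g.lower; have := g.one_le
  have : a * rL a α + rH a α = (a * (a ^ 2 + 1) + (a + 1)) / α ^ 2 := by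
    unfold rL rH; ring
  rw [this, div_le_iff₀ (by positivity)]
  nlinarith

theorem light_bound : a * (rL a α / cL a α) + rL a α ≤ α := by
  have := g.pos; have h3 := g.cube; have h2 := g.sq; have := g.one_le; have := g.lt
  have h : a * (rL a α / cL a α) + rL a α = ((a ^ 2 + 1) * (a * α + a + 1)) / ((a + 1) * α ^ 2) := by
    unfold rL cL; field_simp; ring
  rw [h, div_le_iff₀ (by positivity)]
  have : α * ((a + 1) * α ^ 2) = (a + 1) * ((a ^ 2 + 1) * α + a) := by rw [← h3]; ring
  rw [this]
  have := g.lower'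
  have := g.upper
  nlinarith

theorem rL_sq_bound : rL a α ^ 2 * α ≤ a := by
  have := g.pos; have h3 := g.cube; have h2 := g.sq; have := g.one_le; have h1 := g.lower
  have h : rL a α ^ 2 * α = (a ^ 2 + 1) ^ 2 / α ^ 3 := by
    unfold rL; field_simp
  rw [h, div_le_iff₀ (by positivity), h3]
  nlinarith


theorem pow_bound_full {q : ℕ} (hq : 1 ≤ q) :
    rL a α ^ q * (a + rL a α / α + q * (1 / α)) ≤ α := by
  have := g.pos; have h2 := g.sq; have := g.rL_sq_bound; have := g.rL_pos; have := g.rL_le_one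
  have := g.lt
  have hb : rL a α * (a + rL a α / α + 1 / α) = rL a α * α + rL a α ^ 2 / α := by
    have : α = a + 1 / α := by field_simp; linarith
    linear_combination -rL a α * this
  have hl : rL a α * α + rL a α ^ 2 / α ≤ α := by
    have h0 : rL a α * α = cH a α := by rw [mul_comm]; exact g.mul_rL
    have h1 : rL a α ^ 2 / α ≤ a / α ^ 2 := by
      rw [div_le_div_iff₀ (by positivity) (by positivity)]
      nlinarith
    have h3 : cH a α + a / α ^ 2 = α := by
      have := g.cube
      unfold cH; field_simp; linarith
    linarith
  refine bernoulli_bound g.rL_pos.le g.rL_le_one (by positivity) ?_ (hb.trans_le hl) hq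
  have h4 : rL a α * (1 / α) ≤ 1 / α := mul_le_of_le_one_left (by positivity) g.rL_le_one
  have h5 : a + 1 / α = α := by field_simp; linarith
  have h6 : rL a α * (1 / α) = rL a α / α := by ring
  rw [← hb] at hl
  linarith

theorem pow_bound_heavy (h : 2 ≤ a) {q : ℕ} (hq : 1 ≤ q) :
    rL a α ^ q * ((a ^ 2 + rL a α) / cH a α + q * (1 / α)) ≤ α := by
  have := g.pos; have h2 := g.sq; have h3 := g.cube; have := g.rL_pos; have := g.rL_le_one
  have := g.lt; have := g.lower; have := g.upper
  have hc : (a ^ 2 + rL a α) / cH a α = (a ^ 2 + rL a α) * α / (a ^ 2 + 1) := by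
    unfold cH; field_simp
  have hr : rL a α * α ^ 2 = a ^ 2 + 1 := by unfold rL; field_simp
  have hδ : (1 - rL a α) * α ^ 3 = a := by
    linear_combination -α * hr + h3
  have hu : α ^ 3 ≤ a ^ 3 + 3 * a + 1 / 2 := by
    have : (α - a) * α = 1 := by linarith
    have : α - a ≤ 1 / 2 := by nlinarith
    nlinarith
  have hl : 4 * a ≤ α ^ 3 := by nlinarith
  obtain ⟨δ, hd⟩ : ∃ δ, rL a α = 1 - δ := ⟨1 - rL a α, by ring⟩
  have hδ0 : 0 ≤ δ := by linarith
  have hd1 : δ ≤ 1 / 4 := by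
    have : δ * (4 * a) ≤ a := by
      rw [hd] at hδ
      nlinarith
    nlinarith
  have hd2 : 1 ≤ (a ^ 2 + 13 / 4) * δ := by
    have : a ≤ δ * (a ^ 3 + 3 * a + 1 / 2) := by
      rw [hd] at hδ
      nlinarith
    have : a * 1 ≤ a * ((a ^ 2 + 13 / 4) * δ) := by nlinarith
    exact le_of_mul_le_mul_left this (by linarith)
  have hd3 : 3 * δ ^ 2 ≤ 3 / 4 * δ := by nlinarith
  rw [hc]
  refine bernoulli_bound g.rL_pos.le g.rL_le_one (by positivity) ?_ ?_ hq
  · have e1 : rL a α * ((a ^ 2 + rL a α) * α / (a ^ 2 + 1) + 2 * (1 / α)) =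
        (rL a α * (a ^ 2 + rL a α) + 2 * rL a α ^ 2) * α / (a ^ 2 + 1) := by
      rw [← hr]; field_simp
    have e2 : (a ^ 2 + rL a α) * α / (a ^ 2 + 1) + 1 / α =
        (a ^ 2 + rL a α + rL a α) * α / (a ^ 2 + 1) := by
      rw [← hr]; field_simp
    rw [e1, e2]
    refine (div_le_div_iff_of_pos_right (by positivity)).2 (mul_le_mul_of_nonneg_right ?_ g.pos.le)
    nlinarith
  · have e1 : rL a α * ((a ^ 2 + rL a α) * α / (a ^ 2 + 1) + 1 / α) =
        (rL a α * (a ^ 2 + rL a α) + rL a α ^ 2) * α / (a ^ 2 + 1) := by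
      rw [← hr]; field_simp
    rw [e1, div_le_iff₀ (by positivity), mul_comm α]
    refine mul_le_mul_of_nonneg_right ?_ g.pos.le
    nlinarith

theorem pow_bound_single (h : 2 ≤ a) {q : ℕ} (hq : 1 ≤ q) :
    rL a α ^ q * (a + 1 / (a + 1) + q * (1 / (a + 1))) ≤ α := by
  have := g.pos; have h2 := g.sq; have h3 := g.cube; have := g.rL_pos; have := g.rL_le_one
  have := g.lt; have h5 := g.lower; have h6 := g.upper
  have hr : rL a α * α ^ 2 = a ^ 2 + 1 := by unfold rL; field_simp
  refine bernoulli_bound g.rL_pos.le g.rL_le_one (by positivity) ?_ ?_ hq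
  · have e1 : rL a α * (a + 1 / (a + 1) + 2 * (1 / (a + 1))) =
        (a ^ 2 + 1) * (a ^ 2 + a + 3) / (α ^ 2 * (a + 1)) := by
      unfold rL; field_simp; ring
    have e2 : a + 1 / (a + 1) + 1 / (a + 1) = (a ^ 2 + a + 2) / (a + 1) := by
      field_simp; ring
    rw [e1, e2, div_le_div_iff₀ (by positivity) (by positivity), h2]
    have h7 : (a ^ 2 + 1) * (a ^ 2 + a + 3) ≤ (a ^ 2 + a + 2) * (a * α + 1) := by
      have h8 : a * (a ^ 3 + 2 * a) + (a ^ 2 + 1) ≤ (a ^ 2 + 1) * (a * α + 1) := by nlinarith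
      have h9 := mul_le_mul_of_nonneg_left h8 (show 0 ≤ a ^ 2 + a + 2 by positivity)
      have : (a ^ 2 + 1) * ((a ^ 2 + 1) * (a ^ 2 + a + 3)) ≤
          (a ^ 2 + 1) * ((a ^ 2 + a + 2) * (a * α + 1)) := by
        have : 1 ≤ a ^ 3 := one_le_pow₀ g.one_le
        nlinarith [mul_nonneg (show 0 ≤ a ^ 2 + 1 by positivity) (sub_nonneg.2 this)]
      exact le_of_mul_le_mul_left this (by positivity)
    calc (a ^ 2 + 1) * (a ^ 2 + a + 3) * (a + 1) ≤ (a ^ 2 + a + 2) * (a * α + 1) * (a + 1) :=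
          mul_le_mul_of_nonneg_right h7 (by linarith)
      _ = _ := by ring
  · have e1 : rL a α * (a + 1 / (a + 1) + 1 / (a + 1)) =
        (a ^ 2 + 1) * (a ^ 2 + a + 2) / (α ^ 2 * (a + 1)) := by
      unfold rL; field_simp; ring
    rw [e1, div_le_iff₀ (by positivity)]
    have : α * (α ^ 2 * (a + 1)) = (a + 1) * ((a ^ 2 + 1) * α + a) := by rw [← h3]; ring
    rw [this]
    nlinarith

theorem last_bound (h : 2 ≤ a) :
    a ^ 2 / (a ^ 2 + 1) + a * rL a α / α + rL a α ≤ α := by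
  have := g.pos; have h2 := g.sq; have h3 := g.cube
  have := g.lower'
  have e : a ^ 2 / (a ^ 2 + 1) + a * rL a α / α + rL a α =
      (a ^ 2 * α ^ 3 + (a ^ 2 + 1) ^ 2 * (α + a)) / ((a ^ 2 + 1) * α ^ 3) := by
    unfold rL; field_simp; ring
  rw [e, div_le_iff₀ (by positivity)]
  have e2 : α * ((a ^ 2 + 1) * α ^ 3) = (a ^ 2 + 1) * ((a ^ 3 + 2 * a) * α + a ^ 2 + 1) := by
    linear_combination (a ^ 2 + 1) * (α ^ 2 + a * α + a ^ 2 + 1) * h2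
  rw [e2, h3]
  have hp : 0 ≤ a ^ 5 - 2 * a ^ 4 + 3 * a ^ 3 - 3 * a ^ 2 + 2 * a - 1 := by
    obtain ⟨x, rfl⟩ : ∃ x, a = 2 + x := ⟨a - 2, by ring⟩
    have hx : 0 ≤ x := by linarith
    ring_nf; positivity
  have hr : 0 ≤ (a ^ 5 - 2 * a ^ 4 + 3 * a ^ 3 - 3 * a ^ 2 + 2 * a - 1) * (a ^ 2 + a + 1) -
      (a + 1) * (a ^ 5 - a ^ 4 + 3 * a ^ 3 - 2 * a ^ 2 + a - 1) := by
    obtain ⟨x, rfl⟩ : ∃ x, a = 2 + x := ⟨a - 2, by ring⟩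
    have hx : 0 ≤ x := by linarith
    ring_nf; positivity
  have hq := mul_nonneg hp (sub_nonneg.2 g.lower')
  refine sub_nonneg.1 (nonneg_of_mul_nonneg_right (a := a + 1) ?_ (by linarith))
  linear_combination hq + hr

end Growth
end Growth

section LocalFactors

variable {S : Type*}

/-- Edge weights: a heavy edge of weight `a` to `h z` and a light edge of weight `1` to `l z`. -/
noncomputable def wt (a : ℝ) (h l : S → S) (z v : S) : ℝ :=
  (if v = h z then a else 0) + (if v = l z then 1 else 0)

theorem wt_nonneg {a : ℝ} (ha : 0 ≤ a) (h l : S → S) (z v : S) : 0 ≤ wt a h l z v := by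
  unfold wt; positivity

theorem wt_update (a : ℝ) (h l : S → S) (z x : S) :
    Function.update (wt a h l) z (wt a h l x) =
      wt a (Function.update h z (h x)) (Function.update l z (l x)) := by
  funext y v
  by_cases hy : y = z
  · subst hy; simp [wt]
  · simp [wt, hy]

theorem update_ne_update {h l : S → S} (hl : ∀ z, h z ≠ l z) (z x y : S) :
    Function.update h z (h x) y ≠ Function.update l z (l x) y := by
  by_cases hy : y = z
  · subst hy; simpa using hl x
  · simpa [hy] using hl y

/-- Growth factor of a state whose heavy (resp. light) edge is available iff `p` (resp. `q`). -/
noncomputable def cv (a α : ℝ) (p q : Prop) : ℝ :=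
  if p then (if q then α else cH a α) else (if q then cL a α else 1)

/-- Growth factor of the initial state of a path. -/
noncomputable def dv (a α : ℝ) (p q : Prop) : ℝ :=
  if p then (if q then α else a) else (if q then 1 else 0)

namespace Growth

variable {a α : ℝ} (g : Growth a α)
include g

theorem one_le_cv (p q : Prop) : 1 ≤ cv a α p q := by
  have := g.one_lt; have := g.one_le_cL; have := g.cL_le_cH
  unfold cv; split_ifs <;> linarith

theorem cv_mono {p q p' q' : Prop} (hp : p' → p) (hq : q' → q) : cv a α p' q' ≤ cv a α p q := by
  have := g.one_lt; have := g.one_le_cL; have := g.cL_le_cH; have := g.cH_le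
  unfold cv
  by_cases h1 : p <;> by_cases h2 : q <;> by_cases h3 : p' <;> by_cases h4 : q' <;>
    simp_all <;> linarith

theorem cv_le_rL (h : 2 ≤ a) {p q p' q' : Prop} (hp : p' → p) (hq : q' → q)
    (hlt : p ∧ ¬ p' ∨ q ∧ ¬ q') : cv a α p' q' ≤ rL a α * cv a α p q := by
  have := g.one_lt; have := g.one_le_cL; have := g.cL_le_cH; have := g.cH_le
  have := g.mul_rL; have := g.mul_rH; have := g.rH_le_rL; have := g.one_le_rL_mul_cL h
  have := g.one_le_rH_mul_cH h; have := g.rL_pos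
  have : cL a α ≤ rL a α * α := by nlinarith
  have : cH a α ≤ rL a α * α := by nlinarith
  have : 1 ≤ rL a α * cH a α := by nlinarith
  unfold cv
  by_cases h1 : p <;> by_cases h2 : q <;> by_cases h3 : p' <;> by_cases h4 : q' <;>
    simp_all <;> linarith

theorem cv_le_rH (h : 2 ≤ a) {p q p' q' : Prop} (hq : q' → q)
    (hp : p) (hp' : ¬ p') : cv a α p' q' ≤ rH a α * cv a α p q := by
  have := g.mul_rH; have := g.one_le_rH_mul_cH h; have := g.one_le_cL
  unfold cv
  by_cases h2 : q <;> by_cases h4 : q' <;> simp_all <;> linarith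

theorem cv_le_half (h : a = 1) {p q p' q' : Prop} (hp : p' → p) (hq : q' → q)
    (hlt : p ∧ ¬ p' ∨ q ∧ ¬ q') : cv a α p' q' ≤ α / 2 * cv a α p q := by
  have := g.one_lt
  subst h
  have h1 : α * cL 1 α = 2 := by rw [g.mul_cL]; norm_num
  have h2 : α * cH 1 α = 2 := by rw [g.mul_cH]; norm_num
  have h3 : cL 1 α = cH 1 α := by nlinarith
  have h4 : cH 1 α ≤ α / 2 * α := by
    have := g.sq
    nlinarith
  have h5 := g.one_le_cL
  unfold cv
  by_cases h1 : p <;> by_cases h2 : q <;> by_cases h3 : p' <;> by_cases h4 : q' <;>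
    simp_all <;> linarith

theorem dv_nonneg (p q : Prop) : 0 ≤ dv a α p q := by
  have := g.one_lt; have := g.one_le
  unfold dv; split_ifs <;> linarith

theorem dv_mono {p q p' q' : Prop} (hp : p' → p) (hq : q' → q) : dv a α p' q' ≤ dv a α p q := by
  have := g.one_lt; have := g.one_le; have := g.lt
  unfold dv
  by_cases h1 : p <;> by_cases h2 : q <;> by_cases h3 : p' <;> by_cases h4 : q' <;>
    simp_all <;> linarith

theorem dv_le_cv (p q : Prop) : dv a α p q ≤ cv a α p q := by
  have := g.one_lt; have := g.one_le_cL; have := g.cL_le_cH; have := g.mul_cH; have := g.upper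
  have := g.pos
  have : a ≤ cH a α := by nlinarith
  unfold dv cv; split_ifs <;> linarith

theorem mul_dv_add_one (p q : Prop) : a * dv a α p q + 1 ≤ α * cv a α p q := by
  have := g.one_lt; have := g.mul_cL; have := g.mul_cH; have := g.sq
  unfold dv cv; split_ifs <;> nlinarith

theorem add_dv (p q : Prop) : a + dv a α p q ≤ α * cv a α p q := by
  have := g.one_lt; have := g.mul_cL; have := g.mul_cH; have := g.sq; have := g.one_le
  have := g.lt
  unfold dv cv; split_ifs <;> nlinarith

end Growth

/-- The factor of state `z` when paths are confined to `V`. -/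
noncomputable def fac (a α : ℝ) (t : S) (h l : S → S) (V : Finset S) (z : S) : ℝ :=
  if z = t then α else cv a α (h z ∈ V.erase z) (l z ∈ V.erase z)

/-- The factor of state `z` as the first state of a path continuing in `V`. -/
noncomputable def lead (a α : ℝ) (t : S) (h l : S → S) (V : Finset S) (z : S) : ℝ :=
  if z = t then α else dv a α (h z ∈ V.erase z) (l z ∈ V.erase z)

theorem prod_le_pow_mul {ρ : ℝ} {J W : Finset S} (hJ : J ⊆ W) {f c : S → ℝ}
    (h0 : ∀ z ∈ W, 0 ≤ f z) (h1 : ∀ z ∈ W, f z ≤ c z) (h2 : ∀ z ∈ J, f z ≤ ρ * c z) :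
    ∏ z ∈ W, f z ≤ ρ ^ #J * ∏ z ∈ W, c z := by
  have : ρ ^ #J = ∏ z ∈ W, if z ∈ J then ρ else 1 := by
    rw [prod_ite, prod_const_one, mul_one, prod_const, filter_mem_eq_inter,
      inter_eq_right.2 hJ]
  rw [this, ← prod_mul_distrib]
  refine prod_le_prod h0 fun z hz => ?_
  split_ifs with hzJ
  · exact h2 z hzJ
  · simpa using h1 z hz

section

variable {a α : ℝ} {t : S} {h l : S → S}

theorem one_le_fac (g : Growth a α) (V : Finset S) (z : S) : 1 ≤ fac a α t h l V z := by
  unfold fac; split_ifs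
  · exact g.one_lt.le
  · exact g.one_le_cv _ _

theorem fac_pos (g : Growth a α) (V : Finset S) (z : S) : 0 < fac a α t h l V z :=
  zero_lt_one.trans_le (one_le_fac g V z)

theorem prod_fac_pos (g : Growth a α) (W V : Finset S) : 0 < ∏ z ∈ W, fac a α t h l V z :=
  prod_pos fun z _ => fac_pos g V z

theorem fac_mono (g : Growth a α) {V W : Finset S} (hV : V ⊆ W) (z : S) :
    fac a α t h l V z ≤ fac a α t h l W z := by
  unfold fac; split_ifs
  · exact le_rfl
  · exact g.cv_mono (fun h => erase_subset_erase _ hV h) (fun h => erase_subset_erase _ hV h)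

theorem lead_nonneg (g : Growth a α) (V : Finset S) (z : S) : 0 ≤ lead a α t h l V z := by
  unfold lead; split_ifs
  · exact g.pos.le
  · exact g.dv_nonneg _ _

theorem lead_le_fac (g : Growth a α) (V : Finset S) (z : S) :
    lead a α t h l V z ≤ fac a α t h l V z := by
  unfold fac lead; split_ifs
  · exact le_rfl
  · exact g.dv_le_cv _ _

theorem lead_erase (V : Finset S) (z : S) :
    lead a α t h l (V.erase z) z = lead a α t h l V z := by
  simp [lead]

/-- The states of `V` other than `t` with an edge into `x`. -/
noncomputable def preds (t : S) (h l : S → S) (V : Finset S) (x : S) : Finset S :=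
  V.filter fun z => z ≠ x ∧ z ≠ t ∧ (h z = x ∨ l z = x)

theorem mem_preds {V : Finset S} {x z : S} :
    z ∈ preds t h l V x ↔ z ∈ V ∧ z ≠ x ∧ z ≠ t ∧ (h z = x ∨ l z = x) := by
  simp [preds]

theorem preds_subset (V : Finset S) (x : S) : preds t h l V x ⊆ V.erase x := by
  intro z hz
  rw [mem_preds] at hz
  exact mem_erase.2 ⟨hz.2.1, hz.1⟩

theorem fac_le_rL (g : Growth a α) (h2 : 2 ≤ a) {V W : Finset S} {x z : S} (hW : W ⊆ V)
    (hxW : x ∉ W) (hx : x ∈ V) (hz : z ∈ preds t h l V x) :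
    fac a α t h l W z ≤ rL a α * fac a α t h l V z := by
  obtain ⟨_, hzx, hzt, hpt⟩ := mem_preds.1 hz
  simp only [fac, hzt, if_false]
  refine g.cv_le_rL h2 (fun h => erase_subset_erase _ hW h)
    (fun h => erase_subset_erase _ hW h) ?_
  have hx1 : x ∈ V.erase z := mem_erase.2 ⟨hzx.symm, hx⟩
  have hx2 : x ∉ W.erase z := fun h => hxW (mem_of_mem_erase h)
  rcases hpt with h | h <;> rw [h] <;> tauto

theorem fac_le_half (g : Growth a α) (h2 : a = 1) {V W : Finset S} {x z : S} (hW : W ⊆ V)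
    (hxW : x ∉ W) (hx : x ∈ V) (hz : z ∈ preds t h l V x) :
    fac a α t h l W z ≤ α / 2 * fac a α t h l V z := by
  obtain ⟨_, hzx, hzt, hpt⟩ := mem_preds.1 hz
  simp only [fac, hzt, if_false]
  refine g.cv_le_half h2 (fun h => erase_subset_erase _ hW h)
    (fun h => erase_subset_erase _ hW h) ?_
  have hx1 : x ∈ V.erase z := mem_erase.2 ⟨hzx.symm, hx⟩
  have hx2 : x ∉ W.erase z := fun h => hxW (mem_of_mem_erase h)
  rcases hpt with h | h <;> rw [h] <;> tauto

theorem fac_le_rH (g : Growth a α) (h2 : 2 ≤ a) {V W : Finset S} {x z : S} (hW : W ⊆ V)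
    (hxW : x ∉ W) (hx : x ∈ V) (hz : z ∈ preds t h l V x) (hh : h z = x) :
    fac a α t h l W z ≤ rH a α * fac a α t h l V z := by
  obtain ⟨_, hzx, hzt, -⟩ := mem_preds.1 hz
  simp only [fac, hzt, if_false]
  have hx1 : x ∈ V.erase z := mem_erase.2 ⟨hzx.symm, hx⟩
  have hx2 : x ∉ W.erase z := fun h => hxW (mem_of_mem_erase h)
  exact g.cv_le_rH h2 (fun h => erase_subset_erase _ hW h) (hh ▸ hx1) (hh ▸ hx2)

/-- Removing a state multiplies the product of factors by the losses of its predecessors. -/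
theorem fac_mul_prod_erase_le (g : Growth a α) {ρ : ℝ} {V J : Finset S} {x : S} (hx : x ∈ V)
    (hJ : J ⊆ V.erase x)
    (hρ : ∀ z ∈ J, fac a α t h l (V.erase x) z ≤ ρ * fac a α t h l V z) :
    fac a α t h l V x * ∏ z ∈ V.erase x, fac a α t h l (V.erase x) z ≤
      ρ ^ #J * ∏ z ∈ V, fac a α t h l V z := by
  rw [← mul_prod_erase V _ hx]
  have := prod_le_pow_mul hJ (fun z _ => (fac_pos g (V.erase x) z).le)
    (fun z _ => fac_mono g (erase_subset x V) z) hρ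
  calc _ ≤ fac a α t h l V x * (ρ ^ #J * ∏ z ∈ V.erase x, fac a α t h l V z) :=
        mul_le_mul_of_nonneg_left this (fac_pos g V x).le
    _ = _ := by ring

end

end LocalFactors

section PathBound

variable {S : Type*}

/-- The path sums in `V` are bounded by the product of the local factors. -/
def PathBound (a α : ℝ) (t : S) (V : Finset S) : Prop :=
  ∀ (m : ℕ) (h l : S → S), (∀ z, h z ≠ l z) → ∀ u ∉ V,
    pathSum t (wt a h l) m V u ≤ lead a α t h l V u * ∏ z ∈ V, fac a α t h l V z

variable {a α : ℝ} {t : S} {h l : S → S}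

theorem PathBound.lead_mul {U : Finset S} {y : S} (hB : PathBound a α t (U.erase y))
    (hl : ∀ z, h z ≠ l z) (m : ℕ) :
    pathSum t (wt a h l) m (U.erase y) y ≤
      lead a α t h l U y * ∏ z ∈ U.erase y, fac a α t h l (U.erase y) z := by
  rw [← lead_erase U y]
  exact hB m h l hl y (notMem_erase y U)

theorem PathBound.le_prod (g : Growth a α) {U : Finset S} {y : S} (hy : y ∈ U)
    (hB : PathBound a α t (U.erase y)) (hl : ∀ z, h z ≠ l z) (m : ℕ) :
    pathSum t (wt a h l) m (U.erase y) y ≤ ∏ z ∈ U, fac a α t h l U z := by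
  refine (hB.lead_mul hl m).trans ?_
  rw [← mul_prod_erase U _ hy]
  refine mul_le_mul (lead_le_fac g U y) ?_ (prod_fac_pos g _ _).le (fac_pos g U y).le
  exact prod_le_prod (fun z _ => (fac_pos g _ z).le) fun z _ => fac_mono g (erase_subset y U) z

theorem wt_eq_zero {x z : S} {V : Finset S} (hz : z ∈ V) (hzx : z ≠ x) (hzt : z ≠ t)
    (hp : z ∉ preds t h l V x) : wt a h l z x = 0 := by
  rw [mem_preds] at hp
  have h1 : x ≠ h z := fun h => hp ⟨hz, hzx, hzt, Or.inl h.symm⟩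
  have h2 : x ≠ l z := fun h => hp ⟨hz, hzx, hzt, Or.inr h.symm⟩
  simp [wt, h1, h2]

theorem insert_erase_erase {U : Finset S} {x y : S} (hy : y ∈ U) (hxy : x ≠ y) :
    insert y ((U.erase y).erase x) = U.erase x := by
  rw [erase_right_comm, insert_erase (mem_erase.2 ⟨hxy.symm, hy⟩)]

theorem pathSum_le_of_preds_eq_empty (g : Growth a α) {U : Finset S} {x y : S} (hx : x ∈ U)
    (hy : y ∈ U) (hxy : x ≠ y) (hxt : x ≠ t) (hp : preds t h l U x = ∅) (m : ℕ) :
    pathSum t (wt a h l) m (U.erase y) y ≤ pathSum t (wt a h l) m ((U.erase x).erase y) y := by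
  refine (pathSum_le_contract (wt_nonneg g.a_pos.le h l) hxt m _ y (notMem_erase y U)
    (mem_erase.2 ⟨hxy, hx⟩)).trans ?_
  rw [insert_erase_erase hy hxy, erase_right_comm]
  refine le_of_eq (add_eq_left.2 (sum_eq_zero fun z hz => ?_))
  simp only [mem_erase] at hz
  rw [wt_eq_zero hz.2.2 hz.2.1 hz.1 (by simp [hp]), zero_mul]

theorem PathBound.le_of_preds_eq_empty (g : Growth a α) {U : Finset S} {x y : S} (hx : x ∈ U)
    (hy : y ∈ U) (hxy : x ≠ y) (hxt : x ≠ t) (hp : preds t h l U x = ∅)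
    (hB : PathBound a α t ((U.erase x).erase y)) (hl : ∀ z, h z ≠ l z) (m : ℕ) :
    pathSum t (wt a h l) m (U.erase y) y ≤ ∏ z ∈ U.erase x, fac a α t h l (U.erase x) z :=
  (pathSum_le_of_preds_eq_empty g hx hy hxy hxt hp m).trans
    (hB.le_prod g (mem_erase.2 ⟨hxy.symm, hy⟩) hl m)

theorem pathSum_le_of_light (g : Growth a α) {U : Finset S} {x y : S} (hx : x ∈ U)
    (hy : y ∈ U) (hxy : x ≠ y) (hxt : x ≠ t) (hp : ∀ z ∈ preds t h l U x, h z ≠ x) (m : ℕ) :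
    pathSum t (wt a h l) m (U.erase y) y ≤ pathSum t (wt a h l) m ((U.erase x).erase y) y +
      ∑ z ∈ preds t h l U x, pathSum t (wt a (Function.update h z (h x))
        (Function.update l z (l x))) m ((U.erase x).erase y) y := by
  refine (pathSum_le_contract (wt_nonneg g.a_pos.le h l) hxt m _ y (notMem_erase y U)
    (mem_erase.2 ⟨hxy, hx⟩)).trans ?_
  rw [insert_erase_erase hy hxy, erase_right_comm]
  refine le_of_eq (congrArg _ (Eq.symm ?_))
  have hsub : preds t h l U x ⊆ (U.erase x).erase t := by
    intro z hz
    rw [mem_preds] at hz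
    simp [hz]
  have hone : ∀ z ∈ preds t h l U x, wt a h l z x = 1 := by
    intro z hz
    have h1 := hp z hz
    obtain ⟨-, -, -, h2⟩ := mem_preds.1 hz
    have h3 := h2.resolve_left h1
    simp [wt, h3, Ne.symm h1]
  rw [← sum_subset hsub fun z hz hzp => ?_]
  · refine sum_congr rfl fun z hz => ?_
    rw [hone z hz, one_mul, wt_update]
  · simp only [mem_erase] at hz
    rw [wt_eq_zero hz.2.2 hz.2.1 hz.1 hzp, zero_mul]

section Contracted

variable {V : Finset S} {x y : S}

theorem skip_bound (g : Growth a α) (hx : x ∈ V) (hy : y ∈ V) (hxy : x ≠ y)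
    (hB : PathBound a α t ((V.erase x).erase y)) (hl : ∀ z, h z ≠ l z) (m : ℕ)
    {J : Finset S} (hJ : J ⊆ V.erase x)
    (hJr : ∀ z ∈ J, fac a α t h l ((V.erase x).erase y) z ≤ rL a α * fac a α t h l V z)
    {b φ : ℝ} (hb : 0 ≤ b) (hφ0 : 0 ≤ φ)
    (hlead : lead a α t h l ((V.erase x).erase y) y ≤ b * φ) (hφ : φ ≤ fac a α t h l V y)
    (hφJ : y ∈ J → φ ≤ rL a α * fac a α t h l V y) :
    fac a α t h l V x * pathSum t (wt a h l) m ((V.erase x).erase y) y ≤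
      b * (rL a α ^ #J * ∏ z ∈ V, fac a α t h l V z) := by
  set W := (V.erase x).erase y
  have hyx : y ∈ V.erase x := mem_erase.2 ⟨hxy.symm, hy⟩
  have hWV : W ⊆ V := (erase_subset _ _).trans (erase_subset _ _)
  have hP := hB m h l hl y (notMem_erase y _)
  have hprod : φ * ∏ z ∈ W, fac a α t h l W z =
      ∏ v ∈ V.erase x, if v = y then φ else fac a α t h l W v := by
    rw [← mul_prod_erase (V.erase x) _ hyx, if_pos rfl]
    congr 1
    exact prod_congr rfl fun v hv => by rw [if_neg (ne_of_mem_erase hv)]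
  have hle : φ * ∏ z ∈ W, fac a α t h l W z ≤
      rL a α ^ #J * ∏ z ∈ V.erase x, fac a α t h l V z := by
    rw [hprod]
    refine prod_le_pow_mul hJ (fun z _ => ?_) (fun z _ => ?_) (fun z hz => ?_)
    · split_ifs
      · exact hφ0
      · exact (fac_pos g W z).le
    · split_ifs with hzy
      · exact hzy ▸ hφ
      · exact fac_mono g hWV z
    · split_ifs with hzy
      · subst hzy; exact hφJ hz
      · exact hJr z hz
  calc fac a α t h l V x * pathSum t (wt a h l) m W y
      ≤ fac a α t h l V x * (b * (φ * ∏ z ∈ W, fac a α t h l W z)) := by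
        refine mul_le_mul_of_nonneg_left (hP.trans ?_) (fac_pos g V x).le
        rw [← mul_assoc]
        exact mul_le_mul_of_nonneg_right hlead (prod_fac_pos g _ _).le
    _ ≤ fac a α t h l V x * (b * (rL a α ^ #J * ∏ z ∈ V.erase x, fac a α t h l V z)) :=
        mul_le_mul_of_nonneg_left (mul_le_mul_of_nonneg_left hle hb) (fac_pos g V x).le
    _ = _ := by rw [← mul_prod_erase V _ hx]; ring

theorem via_bound (g : Growth a α) (h2 : 2 ≤ a) (hx : x ∈ V) (hy : y ∈ V) (hxy : x ≠ y)
    (hxt : x ≠ t) (hB : PathBound a α t ((V.erase x).erase y)) (hl : ∀ z, h z ≠ l z) (m : ℕ)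
    {z w : S} (hz : z ∈ preds t h l V x) (hw : w ∈ preds t h l V y)
    (hwx : w ∉ preds t h l V x) {b φ : ℝ} (hb : 0 ≤ b) (hφ0 : 0 ≤ φ)
    (hlead : lead a α t (Function.update h z (h x)) (Function.update l z (l x))
      ((V.erase x).erase y) y ≤ b * φ)
    (hφ : φ = fac a α t (Function.update h z (h x)) (Function.update l z (l x))
      ((V.erase x).erase y) y ∨ φ ≤ fac a α t h l V y ∧ y ∉ preds t h l V x) :
    fac a α t h l V z * pathSum t (wt a (Function.update h z (h x)) (Function.update l z (l x))) m
        ((V.erase x).erase y) y ≤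
      b * (rL a α ^ #(preds t h l V x) * ∏ z ∈ V, fac a α t h l V z) := by
  set W := (V.erase x).erase y with hW
  set h' := Function.update h z (h x) with hh'
  set l' := Function.update l z (l x) with hl'
  obtain ⟨hzV, hzx, hzt, -⟩ := mem_preds.1 hz
  have hyx : y ∈ V.erase x := mem_erase.2 ⟨hxy.symm, hy⟩
  have hzVx : z ∈ V.erase x := mem_erase.2 ⟨hzx, hzV⟩
  have hWV : W ⊆ V := (erase_subset _ _).trans (erase_subset _ _)
  have hxW : x ∉ W := fun h => notMem_erase x V (mem_of_mem_erase h)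
  have hyW : y ∉ W := notMem_erase _ _
  have hP := hB m h' l' (update_ne_update hl z x) y hyW
  set f : S → ℝ := fun v => if v = y then φ else fac a α t h' l' W v with hf
  have hfac : ∀ v, v ≠ z → fac a α t h' l' W v = fac a α t h l W v := by
    intro v hv
    simp [fac, hh', hl', hv]
  have hprod : φ * ∏ z ∈ W, fac a α t h' l' W z = ∏ v ∈ V.erase x, f v := by
    rw [← mul_prod_erase (V.erase x) _ hyx]
    simp only [hf, if_true]
    congr 1
    exact prod_congr rfl fun v hv => by rw [if_neg (ne_of_mem_erase hv)]
  have hf0 : ∀ v, 0 ≤ f v := by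
    intro v
    simp only [hf]
    split_ifs
    · exact hφ0
    · exact (fac_pos g W v).le
  have hfle : ∀ v, v ≠ z → f v ≤ fac a α t h l V v := by
    intro v hv
    simp only [hf]
    split_ifs with hvy
    · subst hvy
      rcases hφ with h | h
      · rw [h, hfac _ hv]; exact fac_mono g hWV _
      · exact h.1
    · rw [hfac _ hv]; exact fac_mono g hWV _
  have hfz : f z = cv a α (h x ∈ W.erase z) (l x ∈ W.erase z) := by
    have : f z = fac a α t h' l' W z := by
      simp only [hf]
      split_ifs with hzy
      · subst hzy
        exact hφ.resolve_right fun h => h.2 hz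
      · rfl
    rw [this]
    simp [fac, hzt, hh', hl']
  have hfx : fac a α t h l V x = cv a α (h x ∈ V.erase x) (l x ∈ V.erase x) := by
    simp [fac, hxt]
  have hsub : W.erase z ⊆ V.erase x := (erase_subset _ _).trans (erase_subset _ _)
  set e : S → ℝ := fun v => if v = z then fac a α t h l V z else if v = x then f z else f v with he
  have hex : e x = f z := by simp [he, Ne.symm hzx]
  have hez : e z = fac a α t h l V z := by simp [he]
  have hev : ∀ v, v ≠ z → v ≠ x → e v = f v := fun v h1 h2 => by simp [he, h1, h2]
  have heprod : ∏ v ∈ V, e v = fac a α t h l V z * ∏ v ∈ V.erase x, f v := by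
    rw [← mul_prod_erase V _ hx, ← mul_prod_erase _ e hzVx, ← mul_prod_erase _ f hzVx, hex, hez,
      prod_congr rfl fun v hv => hev v (ne_of_mem_erase hv)
        (ne_of_mem_erase (mem_of_mem_erase hv))]
    ring
  have hcard : #(insert w ((preds t h l V x).erase z)) = #(preds t h l V x) := by
    rw [card_insert_of_notMem fun h => hwx (mem_of_mem_erase h), card_erase_of_mem hz]
    have := card_pos.2 ⟨z, hz⟩
    omega
  have hle : ∏ v ∈ V, e v ≤ rL a α ^ #(preds t h l V x) * ∏ v ∈ V, fac a α t h l V v := by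
    rw [← hcard]
    refine prod_le_pow_mul ?_ (fun v _ => ?_) (fun v _ => ?_) (fun v hv => ?_)
    · intro v hv
      rcases mem_insert.1 hv with rfl | hv
      · exact (mem_preds.1 hw).1
      · exact (mem_preds.1 (mem_of_mem_erase hv)).1
    · simp only [he]
      split_ifs
      · exact (fac_pos g V z).le
      · exact hf0 _
      · exact hf0 _
    · by_cases hvz : v = z
      · subst hvz; rw [hez]
      by_cases hvx : v = x
      · subst hvx; rw [hex, hfz, hfx]
        exact g.cv_mono (fun h => hsub h) fun h => hsub h
      rw [hev v hvz hvx]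
      exact hfle v hvz
    · rcases mem_insert.1 hv with rfl | hv
      · have hvz : v ≠ z := fun h => hwx (h ▸ hz)
        by_cases hvx : v = x
        · subst hvx
          rw [hex, hfz, hfx]
          obtain ⟨-, -, -, hv⟩ := mem_preds.1 hw
          have hy' : y ∉ W.erase z := fun h => hyW (mem_of_mem_erase h)
          refine g.cv_le_rL h2 (fun h => hsub h) (fun h => hsub h) ?_
          rcases hv with h | h <;> rw [h] <;> tauto
        · rw [hev v hvz hvx]
          have hvy : v ≠ y := (mem_preds.1 hw).2.1
          simp only [hf, hvy, if_false]
          rw [hfac v hvz]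
          exact fac_le_rL g h2 hWV hyW hy hw
      · have hvz := ne_of_mem_erase hv
        have hvp := mem_of_mem_erase hv
        rw [hev v hvz (mem_preds.1 hvp).2.1]
        simp only [hf]
        split_ifs with hvy
        · subst hvy
          rw [hφ.resolve_right fun h => h.2 hvp, hfac _ hvz]
          exact fac_le_rL g h2 hWV hxW hx hvp
        · rw [hfac _ hvz]
          exact fac_le_rL g h2 hWV hxW hx hvp
  have hPb : pathSum t (wt a h' l') m W y ≤ b * ∏ v ∈ V.erase x, f v := by
    refine hP.trans ?_
    rw [← hprod, ← mul_assoc]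
    exact mul_le_mul_of_nonneg_right hlead (prod_fac_pos g _ _).le
  calc _ ≤ fac a α t h l V z * (b * ∏ v ∈ V.erase x, f v) :=
        mul_le_mul_of_nonneg_left hPb (fac_pos g V z).le
    _ = b * ∏ v ∈ V, e v := by rw [heprod]; ring
    _ ≤ _ := mul_le_mul_of_nonneg_left hle hb

end Contracted

end PathBound

section Branching

variable {S : Type*} {a α : ℝ} {t : S} {h l : S → S}

theorem pathSum_wt_succ {u : S} (hut : u ≠ t) (m : ℕ) (V : Finset S) :
    pathSum t (wt a h l) (m + 1) V u =
      (if h u ∈ V then a * pathSum t (wt a h l) m (V.erase (h u)) (h u) else 0) +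
      (if l u ∈ V then pathSum t (wt a h l) m (V.erase (l u)) (l u) else 0) := by
  rw [pathSum_succ hut]
  simp only [wt, add_mul, sum_add_distrib, ite_mul, zero_mul, one_mul, sum_ite_eq']

variable {V : Finset S} {x y : S}

theorem fac_eq (hxt : x ≠ t) :
    fac a α t h l V x = cv a α (h x ∈ V.erase x) (l x ∈ V.erase x) := by
  simp [fac, hxt]

theorem lead_eq (hxt : x ≠ t) :
    lead a α t h l V x = dv a α (h x ∈ V.erase x) (l x ∈ V.erase x) := by
  simp [lead, hxt]

theorem fac_mul_prod_erase_le_prod (g : Growth a α) (hx : x ∈ V) :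
    fac a α t h l V x * ∏ z ∈ V.erase x, fac a α t h l (V.erase x) z ≤
      ∏ z ∈ V, fac a α t h l V z := by
  simpa using fac_mul_prod_erase_le g (ρ := 1) (J := ∅) hx (empty_subset _) (by simp)

theorem PathBound.fac_mul (g : Growth a α) {ρ : ℝ} {J : Finset S} (hx : x ∈ V)
    (hJ : J ⊆ V.erase x)
    (hρ : ∀ z ∈ J, fac a α t h l (V.erase x) z ≤ ρ * fac a α t h l V z)
    (hB : PathBound a α t (V.erase x)) (hl : ∀ z, h z ≠ l z) (m : ℕ) :
    pathSum t (wt a h l) m (V.erase x) x ≤ ρ ^ #J * ∏ z ∈ V, fac a α t h l V z := by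
  refine ((hB.lead_mul hl m).trans ?_).trans (fac_mul_prod_erase_le g hx hJ hρ)
  exact mul_le_mul_of_nonneg_right (lead_le_fac g V x) (prod_fac_pos g _ _).le

theorem branch_of_preds_left (g : Growth a α) (IH : ∀ W ⊂ V, PathBound a α t W)
    (hl : ∀ z, h z ≠ l z) (hx : x ∈ V) (hy : y ∈ V) (hxy : x ≠ y) (hxt : x ≠ t)
    (hp : preds t h l V x = ∅) (m : ℕ) :
    a * pathSum t (wt a h l) m (V.erase x) x + pathSum t (wt a h l) m (V.erase y) y ≤
      α * ∏ z ∈ V, fac a α t h l V z := by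
  have h1 := (IH _ (erase_ssubset hx)).lead_mul (t := t) (α := α) hl m
  have h2 := PathBound.le_of_preds_eq_empty g hx hy hxy hxt hp
    (IH _ ((erase_subset _ _).trans_ssubset (erase_ssubset hx))) hl m
  have h3 := fac_mul_prod_erase_le_prod g (t := t) (h := h) (l := l) hx
  have h4 := prod_fac_pos g (t := t) (h := h) (l := l) (V.erase x) (V.erase x)
  have h5 := g.mul_dv_add_one (h x ∈ V.erase x) (l x ∈ V.erase x)
  rw [← fac_eq hxt, ← lead_eq hxt] at h5
  have := mul_le_mul_of_nonneg_left h1 g.a_pos.le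
  have := mul_le_mul_of_nonneg_left h3 g.pos.le
  have := mul_le_mul_of_nonneg_right h5 h4.le
  linarith

theorem branch_of_preds_right (g : Growth a α) (IH : ∀ W ⊂ V, PathBound a α t W)
    (hl : ∀ z, h z ≠ l z) (hx : x ∈ V) (hy : y ∈ V) (hxy : x ≠ y) (hyt : y ≠ t)
    (hp : preds t h l V y = ∅) (m : ℕ) :
    a * pathSum t (wt a h l) m (V.erase x) x + pathSum t (wt a h l) m (V.erase y) y ≤
      α * ∏ z ∈ V, fac a α t h l V z := by
  have h1 := (IH _ (erase_ssubset hy)).lead_mul (t := t) (α := α) hl m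
  have h2 := PathBound.le_of_preds_eq_empty g hy hx hxy.symm hyt hp
    (IH _ ((erase_subset _ _).trans_ssubset (erase_ssubset hy))) hl m
  have h3 := fac_mul_prod_erase_le_prod g (t := t) (h := h) (l := l) hy
  have h4 := prod_fac_pos g (t := t) (h := h) (l := l) (V.erase y) (V.erase y)
  have h5 := g.add_dv (h y ∈ V.erase y) (l y ∈ V.erase y)
  rw [← fac_eq hyt, ← lead_eq hyt] at h5
  have := mul_le_mul_of_nonneg_left h2 g.a_pos.le
  have := mul_le_mul_of_nonneg_left h3 g.pos.le
  have := mul_le_mul_of_nonneg_right h5 h4.le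
  linarith

/-- The loss of a state that could only be left towards `x`. -/
theorem loss_light (g : Growth a α) (h2 : 2 ≤ a) (IH : ∀ W ⊂ V, PathBound a α t W)
    (hl : ∀ z, h z ≠ l z) (hx : x ∈ V) {z : S} (hz : z ∈ preds t h l V x) (hzx : l z = x)
    (hzh : h z ∉ V.erase z) {J : Finset S} (hJ : J ⊆ (preds t h l V x).erase z) (m : ℕ) :
    cL a α * pathSum t (wt a h l) m (V.erase x) x ≤
      rL a α ^ #J * ∏ z ∈ V, fac a α t h l V z := by
  have hcL : 0 < cL a α := zero_lt_one.trans_le g.one_le_cL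
  obtain ⟨hzV, hzx', hzt, -⟩ := mem_preds.1 hz
  have hzE : z ∈ V.erase x := mem_erase.2 ⟨hzx', hzV⟩
  have hfz : fac a α t h l V z = cL a α := by
    have : l z ∈ V.erase z := mem_erase.2 ⟨hzx ▸ Ne.symm hzx', hzx ▸ hx⟩
    simp [fac_eq hzt, cv, hzh, this]
  have hfz' : fac a α t h l (V.erase x) z = 1 := by
    have h1 : h z ∉ (V.erase x).erase z := fun h => hzh (erase_subset_erase _ (erase_subset _ _) h)
    have h2 : l z ∉ (V.erase x).erase z := by rw [hzx]; simp
    simp only [fac_eq hzt, cv, h1, h2, if_false]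
  have hJE : J ⊆ (V.erase x).erase z := hJ.trans (erase_subset_erase _ (preds_subset V x))
  have hprod : ∏ v ∈ (V.erase x).erase z, fac a α t h l (V.erase x) v ≤
      rL a α ^ #J * ∏ v ∈ (V.erase x).erase z, fac a α t h l V v :=
    prod_le_pow_mul hJE (fun v _ => (fac_pos g _ v).le)
      (fun v _ => fac_mono g (erase_subset _ _) v)
      (fun v hv => fac_le_rL g h2 (erase_subset _ _) (notMem_erase x V) hx
        (mem_of_mem_erase (hJ hv)))
  have hQ := (IH _ (erase_ssubset hx)).lead_mul (t := t) (α := α) hl m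
  rw [← mul_prod_erase _ _ hzE, hfz', one_mul] at hQ
  rw [← mul_prod_erase V _ hx, ← mul_prod_erase _ _ hzE, hfz]
  have h3 : pathSum t (wt a h l) m (V.erase x) x ≤ fac a α t h l V x *
      (rL a α ^ #J * ∏ v ∈ (V.erase x).erase z, fac a α t h l V v) :=
    hQ.trans (mul_le_mul (lead_le_fac g V x) hprod (prod_fac_pos g _ _).le (fac_pos g V x).le)
  calc _ ≤ cL a α * (fac a α t h l V x *
      (rL a α ^ #J * ∏ v ∈ (V.erase x).erase z, fac a α t h l V v)) :=
        mul_le_mul_of_nonneg_left h3 hcL.le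
    _ = _ := by ring

section Light

variable (g : Growth a α) (h2 : 2 ≤ a) (IH : ∀ W ⊂ V, PathBound a α t W)
  (hl : ∀ z, h z ≠ l z) (hx : x ∈ V) (hy : y ∈ V) (hxy : x ≠ y) (hxt : x ≠ t) (hyt : y ≠ t)
  (hpx : ∀ z ∈ preds t h l V x, h z ≠ x) (hpy : ∀ z ∈ preds t h l V y, h z ≠ y)
include g h2 IH hl hx

theorem pathSum_le_rL {z : S} (hz : z ∈ preds t h l V x) (m : ℕ) :
    pathSum t (wt a h l) m (V.erase x) x ≤ rL a α * ∏ z ∈ V, fac a α t h l V z := by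
  have := (IH _ (erase_ssubset hx)).fac_mul g (J := {z}) (ρ := rL a α) hx
    (singleton_subset_iff.2 (preds_subset V x hz))
    (fun v hv => fac_le_rL g h2 (erase_subset _ _) (notMem_erase _ _) hx
      (mem_singleton.1 hv ▸ hz)) hl m
  simpa using this

include hy hxy hxt hpx

theorem branch_light_of_light {z w : S} (hz : z ∈ preds t h l V x) (hzh : h z ∉ V.erase z)
    (hw : w ∈ preds t h l V y) (hwx : w ∉ preds t h l V x) (m : ℕ) :
    a * pathSum t (wt a h l) m (V.erase x) x + pathSum t (wt a h l) m (V.erase y) y ≤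
      α * ∏ z ∈ V, fac a α t h l V z := by
  set N := ∏ z ∈ V, fac a α t h l V z with hN
  have hN0 : 0 < N := prod_fac_pos g V V
  have hcL : 0 < cL a α := zero_lt_one.trans_le g.one_le_cL
  obtain ⟨hzV, hzx', hzt, hzl⟩ := mem_preds.1 hz
  have hzl := hzl.resolve_left (hpx z hz)
  by_cases hcard : ((preds t h l V x).erase z).Nonempty
  · obtain ⟨v, hv⟩ := hcard
    have h3 := loss_light g h2 IH hl hx hz hzl hzh (singleton_subset_iff.2 hv) m
    have h4 := pathSum_le_rL g h2 IH hl hy hw m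
    rw [card_singleton, pow_one] at h3
    have h5 := mul_le_mul_of_nonneg_right g.light_bound hN0.le
    have h6 : pathSum t (wt a h l) m (V.erase x) x ≤ rL a α / cL a α * N := by
      rw [div_mul_eq_mul_div, le_div_iff₀ hcL]; linarith
    have := mul_le_mul_of_nonneg_left h6 g.a_pos.le
    linarith
  · have hsingle : preds t h l V x = {z} := by
      rw [not_nonempty_iff_eq_empty] at hcard
      rw [← insert_erase hz, hcard]; simp
    have h3 := loss_light g h2 IH hl hx hz hzl hzh (empty_subset _) m
    rw [card_empty, pow_zero, one_mul] at h3
    have h4 : pathSum t (wt a h l) m (V.erase y) y ≤ pathSum t (wt a (Function.update h z (h x))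
        (Function.update l z (l x))) m ((V.erase x).erase y) y := by
      rw [← wt_update, erase_right_comm]
      refine pathSum_le_merge (wt_nonneg g.a_pos.le h l) hxt m (V.erase y) y (notMem_erase y V)
        (mem_erase.2 ⟨hxy, hx⟩) ?_ ?_ ?_ ?_
      · rw [insert_erase_erase hy hxy]; simp [hzt, hzx', hzV]
      · simp [wt, hzl, Ne.symm (hpx z hz)]
      · intro v hv hvz
        rw [insert_erase_erase hy hxy] at hv
        simp only [mem_erase] at hv
        exact wt_eq_zero hv.2.2 hv.2.1 hv.1 (by simp [hsingle, hvz])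
      · intro v hv hvz
        simp only [mem_erase] at hv
        have h5 : v ≠ h z := by
          rintro rfl
          exact hzh (mem_erase.2 ⟨hvz, hv.2.2⟩)
        simp [wt, hzl, hv.1, h5]
    have h5 := via_bound g h2 hx hy hxy hxt
      (IH _ ((erase_subset _ _).trans_ssubset (erase_ssubset hx))) hl m hz hw hwx zero_le_one
      (fac_pos g _ _).le (by rw [one_mul]; exact lead_le_fac g _ _) (Or.inl rfl)
    have hfz : fac a α t h l V z = cL a α := by
      have : l z ∈ V.erase z := mem_erase.2 ⟨hzl ▸ Ne.symm hzx', hzl ▸ hx⟩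
      simp [fac_eq hzt, cv, hzh, this]
    rw [hfz, one_mul, hsingle, card_singleton, pow_one] at h5
    have h6 := mul_le_mul_of_nonneg_left h3 g.a_pos.le
    have h7 := mul_le_mul_of_nonneg_left h4 hcL.le
    have h8 := mul_le_mul_of_nonneg_right g.rL_le_one hN0.le
    refine le_of_mul_le_mul_left ?_ hcL
    have h9 : cL a α * (α * N) = (a + 1) * N := by rw [← g.mul_cL]; ring
    rw [h9]
    linarith

include hyt

/-- The second edge is estimated by contracting `x` into each of its predecessors. -/
theorem second_le_of_full {w : S}
    (hfull : ∀ z ∈ preds t h l V x, h z ∈ V.erase z)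
    (hw : w ∈ preds t h l V y) (hwx : w ∉ preds t h l V x) (m : ℕ) {ε : ℝ}
    (hε : ε = 1 ∨ ε = cL a α ∧ y ∉ preds t h l V x ∧ fac a α t h l V y = cL a α ∧
      lead a α t h l V y ≤ 1) :
    pathSum t (wt a h l) m (V.erase y) y ≤ pathSum t (wt a h l) m ((V.erase x).erase y) y +
      #(preds t h l V x) * (rL a α ^ #(preds t h l V x) * (∏ z ∈ V, fac a α t h l V z) /
        (α * ε)) := by
  have hcL : 0 < cL a α := zero_lt_one.trans_le g.one_le_cL
  have hα := g.pos
  refine (pathSum_le_of_light g hx hy hxy hxt hpx m).trans (add_le_add_right ?_ _)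
  rw [← nsmul_eq_mul]
  refine sum_le_card_nsmul _ _ _ fun z hz => ?_
  obtain ⟨hzV, hzx', hzt, hzl⟩ := mem_preds.1 hz
  have hzl := hzl.resolve_left (hpx z hz)
  have hfz : fac a α t h l V z = α := by
    have : l z ∈ V.erase z := mem_erase.2 ⟨hzl ▸ Ne.symm hzx', hzl ▸ hx⟩
    simp [fac_eq hzt, cv, hfull z hz, this]
  have hB := IH _ ((erase_subset y (V.erase x)).trans_ssubset (erase_ssubset hx))
  rcases hε with rfl | ⟨rfl, hyx, hfy, hly⟩
  · have h5 := via_bound g h2 hx hy hxy hxt hB hl m hz hw hwx zero_le_one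
      (fac_pos g _ _).le (by rw [one_mul]; exact lead_le_fac g _ _) (Or.inl rfl)
    rw [hfz, one_mul] at h5
    rw [le_div_iff₀ (by positivity)]
    linarith
  · have h5 := via_bound g h2 hx hy hxy hxt hB hl m hz hw hwx (b := 1 / cL a α) (φ := cL a α)
      (by positivity) hcL.le ?_ (Or.inr ⟨hfy.ge, hyx⟩)
    · rw [hfz] at h5
      rw [le_div_iff₀ (by positivity)]
      have := mul_le_mul_of_nonneg_left h5 hcL.le
      rw [← mul_assoc (cL a α) (1 / cL a α), mul_one_div_cancel hcL.ne', one_mul] at this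
      linarith
    · have hyz : y ≠ z := fun h => hyx (h ▸ hz)
      rw [one_div_mul_cancel hcL.ne']
      refine le_trans ?_ hly
      rw [lead_eq hyt, lead_eq hyt, Function.update_of_ne hyz, Function.update_of_ne hyz]
      have : ((V.erase x).erase y).erase y ⊆ V.erase y := by
        rw [erase_idem]; exact erase_subset_erase _ (erase_subset _ _)
      exact g.dv_mono (fun h => this h) fun h => this h

include hpy

theorem branch_light_of_full {w : S} (hne : (preds t h l V x).Nonempty)
    (hfull : ∀ z ∈ preds t h l V x, h z ∈ V.erase z)
    (hw : w ∈ preds t h l V y) (hwx : w ∉ preds t h l V x) (hp : h x ∈ V.erase x) (m : ℕ) :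
    a * pathSum t (wt a h l) m (V.erase x) x + pathSum t (wt a h l) m (V.erase y) y ≤
      α * ∏ z ∈ V, fac a α t h l V z := by
  set N := ∏ z ∈ V, fac a α t h l V z with hN
  have hN0 : 0 < N := prod_fac_pos g V V
  have hα := g.pos
  have ha := g.a_pos
  have hcL : 0 < cL a α := zero_lt_one.trans_le g.one_le_cL
  have hcH : 0 < cH a α := hcL.trans_le g.cL_le_cH
  have hr0 := g.rL_pos
  set q := #(preds t h l V x) with hq
  have hq1 : 1 ≤ q := card_pos.2 hne
  have hB := IH _ ((erase_subset y (V.erase x)).trans_ssubset (erase_ssubset hx))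
  have hWV : (V.erase x).erase y ⊆ V := (erase_subset _ _).trans (erase_subset _ _)
  have hxW : x ∉ (V.erase x).erase y := fun h => notMem_erase x V (mem_of_mem_erase h)
  have hQ1 := (IH _ (erase_ssubset hx)).lead_mul (t := t) (α := α) hl m
  set E := ∏ z ∈ V.erase x, fac a α t h l (V.erase x) z with hE
  have hEN : fac a α t h l V x * E ≤ rL a α ^ q * N :=
    fac_mul_prod_erase_le g hx (preds_subset V x) fun z hz =>
      fac_le_rL g h2 (erase_subset _ _) (notMem_erase _ _) hx hz
  have hQx : pathSum t (wt a h l) m (V.erase x) x ≤ rL a α ^ q * N := by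
    refine (hQ1.trans ?_).trans hEN
    exact mul_le_mul_of_nonneg_right (lead_le_fac g V x) (prod_fac_pos g _ _).le
  have hQy := second_le_of_full g h2 IH hl hx hy hxy hxt hyt hpx hfull hw hwx m (Or.inl rfl)
  rw [← hq, ← hN, mul_one] at hQy
  set P := rL a α ^ q with hP
  have hP0 : 0 < P := by positivity
  by_cases hw' : ∃ v ∈ preds t h l V y, v ≠ x
  · obtain ⟨v, hv, hvx⟩ := hw'
    have hvp : v ∉ preds t h l V x := by
      intro hvp
      have h1 := (mem_preds.1 hv).2.2.2.resolve_left (hpy v hv)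
      have h2 := (mem_preds.1 hvp).2.2.2.resolve_left (hpx v hvp)
      exact hxy (h2.symm.trans h1)
    have hskip := skip_bound g (J := insert v (preds t h l V x)) hx hy hxy hB hl m
      (insert_subset (mem_erase.2 ⟨hvx, (mem_preds.1 hv).1⟩) (preds_subset V x)) ?_ zero_le_one
      (fac_pos g ((V.erase x).erase y) y).le (by rw [one_mul]; exact lead_le_fac g _ _)
      (fac_mono g hWV y) ?_
    rotate_left
    · intro z hz
      rcases mem_insert.1 hz with rfl | hz
      · exact fac_le_rL g h2 hWV (notMem_erase _ _) hy hv
      · exact fac_le_rL g h2 hWV hxW hx hz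
    · intro hyJ
      have := (mem_insert.1 hyJ).resolve_left (mem_preds.1 hv).2.1.symm
      exact fac_le_rL g h2 hWV hxW hx this
    rw [card_insert_of_notMem hvp, ← hq, ← hN, one_mul, pow_succ, ← hP] at hskip
    by_cases hxl : l x ∈ V.erase x
    · have hfx : fac a α t h l V x = α := by simp [fac_eq hxt, cv, hp, hxl]
      rw [hfx] at hskip
      have h6 : pathSum t (wt a h l) m ((V.erase x).erase y) y ≤ P * rL a α * N / α := by
        rw [le_div_iff₀ hα]; linarith
      have h7 := mul_le_mul_of_nonneg_right (g.pow_bound_full hq1) hN0.le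
      have h8 := mul_le_mul_of_nonneg_left hQx ha.le
      calc _ ≤ a * (P * N) + (P * rL a α * N / α + q * (P * N / α)) := by linarith
        _ = P * (a + rL a α / α + q * (1 / α)) * N := by ring
        _ ≤ _ := h7
    · have hfx : fac a α t h l V x = cH a α := by simp [fac_eq hxt, cv, hp, hxl]
      have hlx : lead a α t h l V x = a := by simp [lead_eq hxt, dv, hp, hxl]
      rw [hfx] at hskip hEN
      rw [hlx] at hQ1
      have h6 : pathSum t (wt a h l) m ((V.erase x).erase y) y ≤ P * rL a α * N / cH a α := by
        rw [le_div_iff₀ hcH]; linarith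
      have h9 : E ≤ P * N / cH a α := by
        rw [le_div_iff₀ hcH]; linarith
      have h7 := mul_le_mul_of_nonneg_right (g.pow_bound_heavy h2 hq1) hN0.le
      have h8 := mul_le_mul_of_nonneg_left (hQ1.trans (mul_le_mul_of_nonneg_left h9 ha.le)) ha.le
      calc _ ≤ a * (a * (P * N / cH a α)) + (P * rL a α * N / cH a α + q * (P * N / α)) := by
            linarith
        _ = P * ((a ^ 2 + rL a α) / cH a α + q * (1 / α)) * N := by ring
        _ ≤ _ := h7
  · push Not at hw'
    obtain rfl : w = x := hw' w hw
    have hxl : l w = y := (mem_preds.1 hw).2.2.2.resolve_left (hpy w hw)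
    have hxl' : l w ∈ V.erase w := hxl ▸ mem_erase.2 ⟨hxy.symm, hy⟩
    have hfx : fac a α t h l V w = α := by simp [fac_eq hxt, cv, hp, hxl']
    by_cases hyh : h y ∈ V.erase y
    · have hfy : cH a α ≤ fac a α t h l V y := by
        have := g.cH_le
        rw [fac_eq hyt, cv, if_pos hyh]; split_ifs <;> linarith
      have hpw : h w ≠ y := fun h => hl w (h.trans hxl.symm)
      have hR : α * cH a α * ∏ z ∈ (V.erase w).erase y, fac a α t h l V z ≤ N := by
        rw [hN, ← mul_prod_erase V _ hx, hfx,
          ← mul_prod_erase (V.erase w) _ (mem_erase.2 ⟨hxy.symm, hy⟩), ← mul_assoc]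
        refine mul_le_mul_of_nonneg_right ?_ (prod_fac_pos g _ _).le
        exact mul_le_mul_of_nonneg_left hfy hα.le
      rw [g.mul_cH] at hR
      have hfst : pathSum t (wt a h l) m (V.erase w) w ≤
          a * (N / (a ^ 2 + 1)) + rL a α * N / α := by
        obtain _ | m := m
        · rw [pathSum_zero hxt]; positivity
        · rw [pathSum_wt_succ hxt, if_pos hp, hxl, if_pos (hxl ▸ hxl')]
          have hempty : preds t h l (V.erase w) y = ∅ := by
            refine eq_empty_of_forall_notMem fun v hv => ?_
            rw [mem_preds] at hv
            exact ne_of_mem_erase hv.1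
              (hw' v (mem_preds.2 ⟨mem_of_mem_erase hv.1, hv.2⟩))
          have h3 := PathBound.le_of_preds_eq_empty g (mem_erase.2 ⟨hxy.symm, hy⟩) hp hpw.symm
            hyt hempty (IH _ (((erase_subset _ _).trans (erase_subset _ _)).trans_ssubset
              (erase_ssubset hx))) hl m
          have h4 : ∏ z ∈ (V.erase w).erase y, fac a α t h l ((V.erase w).erase y) z ≤
              N / (a ^ 2 + 1) := by
            rw [le_div_iff₀ (by positivity), mul_comm]
            refine le_trans (mul_le_mul_of_nonneg_left ?_ (by positivity)) hR
            exact prod_le_prod (fun z _ => (fac_pos g _ z).le) fun z _ => fac_mono g hWV z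
          obtain ⟨z, hz⟩ := hne
          have h5 := skip_bound g (J := {z}) hx hy hxy hB hl m
            (singleton_subset_iff.2 (preds_subset V w hz)) ?_ zero_le_one
            (fac_pos g ((V.erase w).erase y) y).le (by rw [one_mul]; exact lead_le_fac g _ _)
            (fac_mono g hWV y) ?_
          rotate_left
          · intro v hv
            exact fac_le_rL g h2 hWV hxW hx (mem_singleton.1 hv ▸ hz)
          · intro hv
            exact fac_le_rL g h2 hWV hxW hx (mem_singleton.1 hv ▸ hz)
          rw [hfx, card_singleton, pow_one, one_mul, ← hN] at h5
          have h6 : pathSum t (wt a h l) m ((V.erase w).erase y) y ≤ rL a α * N / α := by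
            rw [le_div_iff₀ hα]; linarith
          have h7 := mul_le_mul_of_nonneg_left (h3.trans h4) ha.le
          linarith
      have h4 := pathSum_le_rL g h2 IH hl hy hw m
      have h5 := mul_le_mul_of_nonneg_right (g.last_bound h2) hN0.le
      have h6 := mul_le_mul_of_nonneg_left hfst ha.le
      calc _ ≤ a * (a * (N / (a ^ 2 + 1)) + rL a α * N / α) + rL a α * N := by linarith
        _ = (a ^ 2 / (a ^ 2 + 1) + a * rL a α / α + rL a α) * N := by ring
        _ ≤ _ := h5
    by_cases hyl : l y ∈ V.erase y
    · have hfy : fac a α t h l V y = cL a α := by simp [fac_eq hyt, cv, hyh, hyl]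
      have hly : lead a α t h l V y = 1 := by simp [lead_eq hyt, dv, hyh, hyl]
      have hyp : y ∉ preds t h l V w := fun h => hyh (hfull y h)
      have h3 := second_le_of_full g h2 IH hl hx hy hxy hxt hyt hpx hfull hw hwx m
        (Or.inr ⟨rfl, hyp, hfy, hly.le⟩)
      rw [g.mul_cL, ← hq, ← hN, ← hP] at h3
      have h5 := skip_bound g (J := preds t h l V w) (b := 1 / cL a α) (φ := cL a α) hx hy hxy
        hB hl m (preds_subset V w) (fun z hz => fac_le_rL g h2 hWV hxW hx hz) (by positivity)
        hcL.le ?_ hfy.ge (fun h => absurd h hyp)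
      · rw [hfx, ← hq, ← hP, ← hN] at h5
        have h6 : pathSum t (wt a h l) m ((V.erase w).erase y) y ≤ P * N / (a + 1) := by
          rw [← g.mul_cL, le_div_iff₀ (by positivity)]
          have := mul_le_mul_of_nonneg_left h5 hcL.le
          rw [← mul_assoc (cL a α) (1 / cL a α), mul_one_div_cancel hcL.ne', one_mul] at this
          linarith
        have h7 := mul_le_mul_of_nonneg_left hQx ha.le
        have h8 := mul_le_mul_of_nonneg_right (g.pow_bound_single h2 hq1) hN0.le
        calc _ ≤ a * (P * N) + (P * N / (a + 1) + q * (P * N / (a + 1))) := by linarith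
          _ = P * (a + 1 / (a + 1) + q * (1 / (a + 1))) * N := by ring
          _ ≤ _ := h8
      · rw [one_div_mul_cancel hcL.ne', ← hly, lead_eq hyt, lead_eq hyt]
        have : ((V.erase w).erase y).erase y ⊆ V.erase y := by
          rw [erase_idem]; exact erase_subset_erase _ (erase_subset _ _)
        exact g.dv_mono (fun h => this h) fun h => this h
    · have hly : lead a α t h l V y = 0 := by simp [lead_eq hyt, dv, hyh, hyl]
      have h3 := (IH _ (erase_ssubset hy)).lead_mul (t := t) (α := α) hl m
      rw [hly, zero_mul] at h3
      obtain ⟨z, hz⟩ := hne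
      have h4 := pathSum_le_rL g h2 IH hl hx hz m
      have h5 := mul_le_mul_of_nonneg_left h4 ha.le
      have h6 : a * rL a α ≤ α := by
        have := g.rL_le_one; have := g.lt
        nlinarith
      have := mul_le_mul_of_nonneg_right h6 hN0.le
      linarith

end Light

end Branching

section Main

variable {S : Type*} {a α : ℝ} {t : S} {h l : S → S} {V : Finset S} {x y : S}

theorem branch_light (g : Growth a α) (h2 : 2 ≤ a) (IH : ∀ W ⊂ V, PathBound a α t W)
    (hl : ∀ z, h z ≠ l z) (hx : x ∈ V) (hy : y ∈ V) (hxy : x ≠ y) (hxt : x ≠ t) (hyt : y ≠ t)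
    (hpx : ∀ z ∈ preds t h l V x, h z ≠ x) (hpy : ∀ z ∈ preds t h l V y, h z ≠ y)
    (hnx : (preds t h l V x).Nonempty) (hny : (preds t h l V y).Nonempty) (m : ℕ) :
    a * pathSum t (wt a h l) m (V.erase x) x + pathSum t (wt a h l) m (V.erase y) y ≤
      α * ∏ z ∈ V, fac a α t h l V z := by
  obtain ⟨w, hw⟩ := hny
  have hwx : w ∉ preds t h l V x := fun hwx =>
    hxy (((mem_preds.1 hwx).2.2.2.resolve_left (hpx w hwx)).symm.trans
      ((mem_preds.1 hw).2.2.2.resolve_left (hpy w hw)))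
  by_cases hfull : ∀ z ∈ preds t h l V x, h z ∈ V.erase z
  swap
  · push Not at hfull
    obtain ⟨z, hz, hzh⟩ := hfull
    exact branch_light_of_light g h2 IH hl hx hy hxy hxt hpx hz hzh hw hwx m
  by_cases hp : h x ∈ V.erase x
  · exact branch_light_of_full g h2 IH hl hx hy hxy hxt hyt hpx hpy hnx hfull hw hwx hp m
  have hN0 : 0 < ∏ z ∈ V, fac a α t h l V z := prod_fac_pos g V V
  have hcL : 0 < cL a α := zero_lt_one.trans_le g.one_le_cL
  have hQ := (IH _ (erase_ssubset hx)).lead_mul (t := t) (α := α) hl m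
  have hQy := pathSum_le_rL g h2 IH hl hy hw m
  by_cases hq : l x ∈ V.erase x
  · have hfx : fac a α t h l V x = cL a α := by simp [fac_eq hxt, cv, hp, hq]
    have hlx : lead a α t h l V x = 1 := by simp [lead_eq hxt, dv, hp, hq]
    obtain ⟨z, hz⟩ := hnx
    have hE := fac_mul_prod_erase_le (t := t) (h := h) (l := l) g (J := {z}) (ρ := rL a α) hx
      (singleton_subset_iff.2 (preds_subset V x hz))
      (fun v hv => fac_le_rL g h2 (erase_subset _ _) (notMem_erase _ _) hx
        (mem_singleton.1 hv ▸ hz))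
    rw [hfx, card_singleton, pow_one] at hE
    rw [hlx, one_mul] at hQ
    have h6 : pathSum t (wt a h l) m (V.erase x) x ≤
        rL a α / cL a α * ∏ z ∈ V, fac a α t h l V z := by
      rw [div_mul_eq_mul_div, le_div_iff₀ hcL]; nlinarith
    have h5 := mul_le_mul_of_nonneg_right g.light_bound hN0.le
    have := mul_le_mul_of_nonneg_left h6 g.a_pos.le
    linarith
  · have hlx : lead a α t h l V x = 0 := by simp [lead_eq hxt, dv, hp, hq]
    rw [hlx, zero_mul] at hQ
    have := mul_le_mul_of_nonneg_left hQ g.a_pos.le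
    have := mul_le_mul_of_nonneg_right (g.rL_le_one.trans g.one_lt.le) hN0.le
    linarith

theorem pathSum_le_rH (g : Growth a α) (h2 : 2 ≤ a) (IH : ∀ W ⊂ V, PathBound a α t W)
    (hl : ∀ z, h z ≠ l z) (hx : x ∈ V) {z : S} (hz : z ∈ preds t h l V x) (hh : h z = x)
    (m : ℕ) :
    pathSum t (wt a h l) m (V.erase x) x ≤ rH a α * ∏ z ∈ V, fac a α t h l V z := by
  have := (IH _ (erase_ssubset hx)).fac_mul g (J := {z}) (ρ := rH a α) hx
    (singleton_subset_iff.2 (preds_subset V x hz))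
    (fun v hv => by
      rw [mem_singleton.1 hv]
      exact fac_le_rH g h2 (erase_subset _ _) (notMem_erase _ _) hx hz hh) hl m
  simpa using this

theorem pathSum_le_half (g : Growth a α) (h1 : a = 1) (IH : ∀ W ⊂ V, PathBound a α t W)
    (hl : ∀ z, h z ≠ l z) (hx : x ∈ V) {z : S} (hz : z ∈ preds t h l V x) (m : ℕ) :
    pathSum t (wt a h l) m (V.erase x) x ≤ α / 2 * ∏ z ∈ V, fac a α t h l V z := by
  have := (IH _ (erase_ssubset hx)).fac_mul g (J := {z}) (ρ := α / 2) hx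
    (singleton_subset_iff.2 (preds_subset V x hz))
    (fun v hv => by
      rw [mem_singleton.1 hv]
      exact fac_le_half g h1 (erase_subset _ _) (notMem_erase _ _) hx hz) hl m
  simpa using this

theorem branch_bound (g : Growth a α) (ha : a = 1 ∨ 2 ≤ a) (IH : ∀ W ⊂ V, PathBound a α t W)
    (hl : ∀ z, h z ≠ l z) (hx : x ∈ V) (hy : y ∈ V) (hxy : x ≠ y) (m : ℕ) :
    a * pathSum t (wt a h l) m (V.erase x) x + pathSum t (wt a h l) m (V.erase y) y ≤
      α * ∏ z ∈ V, fac a α t h l V z := by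
  set N := ∏ z ∈ V, fac a α t h l V z with hN
  have hN0 : 0 < N := prod_fac_pos g V V
  have hQx := (IH _ (erase_ssubset hx)).le_prod g (t := t) (h := h) (l := l) hx hl m
  have hQy := (IH _ (erase_ssubset hy)).le_prod g (t := t) (h := h) (l := l) hy hl m
  rw [← hN] at hQx hQy
  have hNt : t ∈ V → α ≤ N := by
    intro ht
    have h1 : fac a α t h l V t = α := by simp [fac]
    rw [hN, ← mul_prod_erase V _ ht, h1]
    refine le_mul_of_one_le_right g.pos.le ?_
    exact Finset.one_le_prod fun z _ => one_le_fac g V z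
  have hsq := g.sq
  have hap := g.a_pos
  have hlt := g.lt
  by_cases hxt : x = t
  · subst hxt
    rw [pathSum_self]
    have := hNt hx
    have : (α - 1) * α ≤ (α - 1) * N := mul_le_mul_of_nonneg_left this (by linarith [g.one_lt])
    have := g.one_le
    nlinarith
  by_cases hyt : y = t
  · subst hyt
    rw [pathSum_self]
    have := hNt hy
    have := mul_le_mul_of_nonneg_left this (sub_nonneg.2 hlt.le)
    have := mul_le_mul_of_nonneg_left hQx hap.le
    nlinarith
  rcases (preds t h l V x).eq_empty_or_nonempty with hpx | ⟨z, hz⟩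
  · exact branch_of_preds_left g IH hl hx hy hxy hxt hpx m
  rcases (preds t h l V y).eq_empty_or_nonempty with hpy | ⟨w, hw⟩
  · exact branch_of_preds_right g IH hl hx hy hxy hyt hpy m
  rcases ha with h1 | h2
  · have := pathSum_le_half g h1 IH hl hx hz m
    have := pathSum_le_half g h1 IH hl hy hw m
    rw [← hN] at *
    subst h1
    linarith
  by_cases hpx : ∀ z ∈ preds t h l V x, h z ≠ x
  · by_cases hpy : ∀ z ∈ preds t h l V y, h z ≠ y
    · exact branch_light g h2 IH hl hx hy hxy hxt hyt hpx hpy ⟨z, hz⟩ ⟨w, hw⟩ m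
    push Not at hpy
    obtain ⟨v, hv, hvy⟩ := hpy
    have h3 := mul_le_mul_of_nonneg_left (pathSum_le_rL g h2 IH hl hx hz m) hap.le
    have h4 := pathSum_le_rH g h2 IH hl hy hv hvy m
    have h5 := mul_le_mul_of_nonneg_right g.heavy_bound hN0.le
    linarith
  · push Not at hpx
    obtain ⟨v, hv, hvx⟩ := hpx
    have h3 := mul_le_mul_of_nonneg_left (pathSum_le_rH g h2 IH hl hx hv hvx m) hap.le
    have h4 := pathSum_le_rL g h2 IH hl hy hw m
    have h5 := mul_le_mul_of_nonneg_right g.heavy_bound hN0.le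
    have h6 : (a - 1) * rH a α ≤ (a - 1) * rL a α :=
      mul_le_mul_of_nonneg_left g.rH_le_rL (by linarith)
    have := mul_le_mul_of_nonneg_right h6 hN0.le
    linarith

/-- The weighted number of paths ending in `t` is at most the product of the local factors. -/
theorem pathBound (g : Growth a α) (ha : a = 1 ∨ 2 ≤ a) (t : S) (V : Finset S) :
    PathBound a α t V := by
  induction V using Finset.strongInduction with
  | H V IH =>
    intro m h l hl u hu
    have hN0 : 0 < ∏ z ∈ V, fac a α t h l V z := prod_fac_pos g V V
    have h1N : 1 ≤ ∏ z ∈ V, fac a α t h l V z :=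
      Finset.one_le_prod fun z _ => one_le_fac g V z
    by_cases hut : u = t
    · subst hut
      rw [pathSum_self]
      simp only [lead, if_true]
      nlinarith [g.one_lt]
    obtain _ | m := m
    · rw [pathSum_zero hut]
      exact mul_nonneg (lead_nonneg g V u) hN0.le
    rw [pathSum_wt_succ hut, lead_eq hut, erase_eq_of_notMem hu]
    have hQ : ∀ v ∈ V, pathSum t (wt a h l) m (V.erase v) v ≤ ∏ z ∈ V, fac a α t h l V z :=
      fun v hv => (IH _ (erase_ssubset hv)).le_prod g hv hl m
    by_cases hp : h u ∈ V <;> by_cases hq : l u ∈ V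
    · simpa [hp, hq, dv] using branch_bound g ha IH hl hp hq (hl u) m
    · simpa [hp, hq, dv] using mul_le_mul_of_nonneg_left (hQ _ hp) g.a_pos.le
    · simpa [hp, hq, dv] using hQ _ hq
    · simp [hp, hq, dv]

end Main

section Rows

variable {S : Type*} [Fintype S] {a α : ℝ}

theorem exists_pair_max (hn : 2 ≤ Fintype.card S) (g : S → ℝ) :
    ∃ p q : S, p ≠ q ∧ g q ≤ g p ∧ ∀ v, v ≠ p → g v ≤ g q := by
  have : Nontrivial S := Fintype.one_lt_card_iff_nontrivial.1 hn
  obtain ⟨p, -, hp⟩ := exists_max_image univ g univ_nonempty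
  obtain ⟨r, hr⟩ := exists_ne p
  obtain ⟨q, hq, hq'⟩ := exists_max_image (univ.erase p) g ⟨r, mem_erase.2 ⟨hr, mem_univ _⟩⟩
  exact ⟨p, q, (ne_of_mem_erase hq).symm, hp q (mem_univ _),
    fun v hv => hq' v (mem_erase.2 ⟨hv, mem_univ _⟩)⟩

theorem sum_mul_le_pair {r g : S → ℝ} {p q : S} (hr : ∀ v, 0 ≤ r v) (hs : ∑ v, r v = a + 1)
    (hle : ∀ v, r v ≤ a) (hqp : g q ≤ g p) (hq : ∀ v, v ≠ p → g v ≤ g q) :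
    ∑ v, r v * g v ≤ a * g p + g q := by
  rw [← add_sum_erase univ _ (mem_univ p)] at hs ⊢
  have h1 : ∑ v ∈ univ.erase p, r v * g v ≤ (a + 1 - r p) * g q := by
    have : a + 1 - r p = ∑ v ∈ univ.erase p, r v := by linarith
    rw [this, sum_mul]
    exact sum_le_sum fun v hv => mul_le_mul_of_nonneg_left (hq v (ne_of_mem_erase hv)) (hr v)
  nlinarith [mul_nonneg (sub_nonneg.2 (hle p)) (sub_nonneg.2 hqp)]

/-- A row of the weight matrix can be replaced by one heavy and one light edge. -/
theorem exists_row_replacement (hn : 2 ≤ Fintype.card S) (ha : 1 ≤ a) {w : S → S → ℝ}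
    (hw : ∀ u v, 0 ≤ w u v) {z : S} {NB : Prop} (hNB : NB → ∃ v, w z = Pi.single v 1)
    (hbr : ¬ NB → ∑ v, w z v = a + 1 ∧ ∀ v, w z v ≤ a) (t : S) (m : ℕ) {V : Finset S} {u : S}
    (hu : u ∉ V) :
    ∃ p q : S, p ≠ q ∧ (NB → p = z) ∧ pathSum t w m V u ≤
      pathSum t (Function.update w z fun v => (if v = p then a else 0) + (if v = q then 1 else 0))
        m V u := by
  by_cases h : NB
  · obtain ⟨x, hx⟩ := hNB h
    obtain ⟨q, hq, hqx⟩ : ∃ q, z ≠ q ∧ (x ≠ z → q = x) := by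
      by_cases hxz : x = z
      · have : Nontrivial S := Fintype.one_lt_card_iff_nontrivial.1 hn
        obtain ⟨q, hq⟩ := exists_ne z
        exact ⟨q, hq.symm, fun h => absurd hxz h⟩
      · exact ⟨x, Ne.symm hxz, fun _ => rfl⟩
    refine ⟨z, q, hq, fun _ => rfl, pathSum_mono_weight hw (fun y v => ?_) m V u⟩
    by_cases hy : y = z
    · subst hy
      simp only [hx, Function.update_self, Pi.single_apply]
      by_cases hvx : v = x
      · subst hvx
        by_cases hvy : v = y
        · subst hvy; simp [hq, ha]
        · simp [hvy, hqx hvy]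
      · simp only [hvx, if_false]; positivity
    · simp [hy]
  · obtain ⟨hs, hle⟩ := hbr h
    obtain ⟨c, g, hg⟩ := pathSum_update_affine t w z m V u hu
    obtain ⟨p, q, hpq, hqp, hq⟩ := exists_pair_max hn g
    refine ⟨p, q, hpq, fun h' => absurd h' h, ?_⟩
    have := sum_mul_le_pair (hw z) hs hle hqp hq
    nth_rewrite 1 [← Function.update_eq_self z w]
    rw [hg, hg]
    simpa [add_mul, sum_add_distrib] using this

theorem exists_wt_bound (hn : 2 ≤ Fintype.card S) (ha : 1 ≤ a) {w : S → S → ℝ}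
    (hw : ∀ u v, 0 ≤ w u v) {NB : S → Prop} (hNB : ∀ z, NB z → ∃ v, w z = Pi.single v 1)
    (hbr : ∀ z, ¬ NB z → ∑ v, w z v = a + 1 ∧ ∀ v, w z v ≤ a) (t : S) (m : ℕ) {V : Finset S}
    {u : S} (hu : u ∉ V) :
    ∃ h l : S → S, (∀ z, h z ≠ l z) ∧ (∀ z, NB z → h z = z) ∧
      pathSum t w m V u ≤ pathSum t (wt a h l) m V u := by
  have : Nontrivial S := Fintype.one_lt_card_iff_nontrivial.1 hn
  obtain ⟨x, y, hxy⟩ := exists_pair_ne S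
  suffices ∀ Z : Finset S, ∃ h l : S → S, (∀ z, h z ≠ l z) ∧ (∀ z ∈ Z, NB z → h z = z) ∧
      pathSum t w m V u ≤ pathSum t (fun z => if z ∈ Z then wt a h l z else w z) m V u by
    simpa using this univ
  intro Z
  induction Z using Finset.induction_on with
  | empty => exact ⟨fun _ => x, fun _ => y, fun _ => hxy, by simp, by simp⟩
  | insert z Z hz ih =>
    obtain ⟨h, l, hl, hZ, hP⟩ := ih
    set w' : S → S → ℝ := fun z => if z ∈ Z then wt a h l z else w z with hw'
    have hw'z : w' z = w z := by simp [hw', hz]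
    have hw'0 : ∀ u v, 0 ≤ w' u v := by
      intro u v
      simp only [hw']
      split_ifs
      · exact wt_nonneg (by linarith) h l u v
      · exact hw u v
    obtain ⟨p, q, hpq, hp, hle⟩ := exists_row_replacement hn ha hw'0 (z := z) (NB := NB z)
      (fun h => hw'z ▸ hNB z h) (fun h => hw'z ▸ hbr z h) t m hu
    refine ⟨Function.update h z p, Function.update l z q, fun y => ?_, fun y hy hy' => ?_,
      (hP.trans hle).trans_eq ?_⟩
    · by_cases hy : y = z
      · subst hy; simpa using hpq
      · simpa [hy] using hl y
    · by_cases hyz : y = z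
      · subst hyz; simpa using hp hy'
      · simpa [hyz] using hZ y ((mem_insert.1 hy).resolve_left hyz) hy'
    · congr 1
      funext y v
      by_cases hyz : y = z
      · subst hyz; simp [wt]
      · have : wt a (Function.update h z p) (Function.update l z q) y v = wt a h l y v := by
          simp [wt, hyz]
        by_cases hy : y ∈ Z <;> simp [hyz, hw', hy, this]

/-- The number of paths to `t`, counted with the number of actions at `t`. -/
theorem mul_pathSum_le (g : Growth a α) (ha : a = 1 ∨ 2 ≤ a) (hn : 2 ≤ Fintype.card S)
    {w : S → S → ℝ} (hw : ∀ u v, 0 ≤ w u v) {NB : S → Prop}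
    (hNB : ∀ z, NB z → ∃ v, w z = Pi.single v 1)
    (hbr : ∀ z, ¬ NB z → ∑ v, w z v = a + 1 ∧ ∀ v, w z v ≤ a) (t u : S) (m : ℕ) :
    (if NB t then 1 else a + 1) * pathSum t w m (univ.erase u) u ≤
      (a + 1) * (cL a α ^ #(univ.filter NB) * α ^ #(univ.filter fun z => ¬ NB z)) := by
  obtain ⟨h, l, hl, hself, hle⟩ := exists_wt_bound hn g.one_le hw hNB hbr t m (notMem_erase u univ)
  have hP := hle.trans
    ((pathBound g ha t (univ.erase u)).le_prod g (mem_univ u) hl m)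
  set d : S → ℝ := fun z => if NB z then cL a α else α with hd
  have hd1 : ∀ z, 1 ≤ d z := fun z => by
    simp only [hd]; split_ifs
    · exact g.one_le_cL
    · exact g.one_lt.le
  have hprod : cL a α ^ #(univ.filter NB) * α ^ #(univ.filter fun z => ¬ NB z) = ∏ z, d z := by
    rw [hd, prod_ite, prod_const, prod_const]
  have hf : ∀ z, z ≠ t → fac a α t h l univ z ≤ d z := by
    intro z hz
    by_cases hb : NB z
    · have h1 : h z ∉ univ.erase z := by simp [hself z hb]
      simp only [fac_eq hz, hd, hb, if_true, cv, h1, if_false]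
      split_ifs
      · exact le_rfl
      · exact g.one_le_cL
    · have := g.one_lt; have := g.cH_le; have := g.cL_le_cH
      simp only [fac_eq hz, hd, hb, if_false, cv]
      split_ifs <;> linarith
  have hE : ∏ z ∈ univ.erase t, fac a α t h l univ z ≤ ∏ z ∈ univ.erase t, d z :=
    prod_le_prod (fun z _ => (fac_pos g _ z).le) fun z hz => hf z (ne_of_mem_erase hz)
  have hft : fac a α t h l univ t = α := by simp [fac]
  rw [hprod, ← mul_prod_erase univ d (mem_univ t)]
  rw [← mul_prod_erase univ _ (mem_univ t), hft] at hP
  have hD : 0 ≤ ∏ z ∈ univ.erase t, d z := prod_nonneg fun z _ => zero_le_one.trans (hd1 z)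
  have ha1 : α ≤ a + 1 := by nlinarith [g.sq, g.one_lt]
  have hP' := hP.trans (mul_le_mul_of_nonneg_left hE g.pos.le)
  have h1a := g.one_le
  by_cases hb : NB t
  · rw [if_pos hb, one_mul]
    have h2 := mul_le_mul_of_nonneg_right (hd1 t) hD
    have h3 := mul_le_mul_of_nonneg_right ha1 hD
    have h4 := mul_le_mul_of_nonneg_left h2 (show 0 ≤ a + 1 by linarith)
    linarith
  · rw [if_neg hb]
    have : d t = α := by simp [hd, hb]
    rw [this]
    exact mul_le_mul_of_nonneg_left hP' (by linarith)

end Rows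

section Chains

variable {β : Type*} {f : ℕ → β} {ρ : β → ℝ} {j : ℕ}

theorem card_image_range_succ_of_lt (hmono : ∀ i < j, ρ (f i) ≤ ρ (f (i + 1)))
    (hlt : ρ (f j) < ρ (f (j + 1))) :
    #(image f (range (j + 1))) + 1 = #(image f (range (j + 2))) := by
  have hle : ∀ d i, i + d = j → ρ (f i) ≤ ρ (f j) := by
    intro d
    induction d with
    | zero => rintro i rfl; exact le_rfl
    | succ d ih => intro i hi; exact (hmono i (by omega)).trans (ih (i + 1) (by omega))
  have hnew : f (j + 1) ∉ image f (range (j + 1)) := by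
    intro h
    obtain ⟨i, hi, hij⟩ := mem_image.1 h
    rw [mem_range] at hi
    have := hle (j - i) i (by omega)
    rw [hij] at this
    linarith
  rw [range_add_one (n := j + 1), image_insert, card_insert_of_notMem hnew]

theorem card_image_range_succ_le (f : ℕ → β) (j : ℕ) :
    #(image f (range (j + 1))) ≤ #(image f (range (j + 2))) :=
  card_le_card (image_subset_image (range_subset_range.2 (by omega)))

end Chains

namespace DMDP

variable {S A : Type*} (M : DMDP S A)

section Values

theorem traj_zero (π : S → A) (s : S) : M.traj π s 0 = s := rfl

theorem traj_succ (π : S → A) (s : S) (t : ℕ) :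
    M.traj π s (t + 1) = M.T (M.traj π s t) (π (M.traj π s t)) :=
  Function.iterate_succ_apply' _ _ _

theorem traj_succ' (π : S → A) (s : S) (t : ℕ) :
    M.traj π s (t + 1) = M.traj π (M.T s (π s)) t :=
  Function.iterate_succ_apply _ _ _

theorem summable_reward [Fintype S] (π : S → A) (s : S) :
    Summable fun t : ℕ => M.gamma ^ t * M.R (M.traj π s t) (π (M.traj π s t)) := by
  have hb : ∀ x, |M.R x (π x)| ≤ ∑ x, |M.R x (π x)| := fun x =>
    single_le_sum (f := fun x => |M.R x (π x)|) (fun y _ => abs_nonneg _) (mem_univ x)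
  refine Summable.of_norm_bounded
    ((summable_geometric_of_lt_one M.gamma_nonneg M.gamma_lt_one).mul_right
      (∑ x, |M.R x (π x)|)) fun t => ?_
  rw [Real.norm_eq_abs, abs_mul, abs_of_nonneg (pow_nonneg M.gamma_nonneg t)]
  exact mul_le_mul_of_nonneg_left (hb _) (pow_nonneg M.gamma_nonneg t)

theorem V_eq_Q [Fintype S] (π : S → A) (s : S) : M.V π s = M.Q π s (π s) := by
  rw [V, (M.summable_reward π s).tsum_eq_zero_add, Q, V, ← tsum_mul_left]
  simp only [traj_zero, pow_zero, one_mul, traj_succ']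
  congr 1
  exact tsum_congr fun t => by ring

theorem V_congr {π π' : S → A} {D : Set S} (hclosed : ∀ x ∈ D, M.T x (π x) ∈ D)
    (hD : ∀ x ∈ D, π x = π' x) {s : S} (hs : s ∈ D) : M.V π s = M.V π' s := by
  have key : ∀ t, M.traj π s t = M.traj π' s t ∧ M.traj π s t ∈ D := by
    intro t
    induction t with
    | zero => exact ⟨rfl, hs⟩
    | succ t ih =>
      refine ⟨?_, ?_⟩
      · rw [traj_succ, traj_succ, ← ih.1, hD _ ih.2]
      · rw [traj_succ]; exact hclosed _ ih.2
  exact tsum_congr fun t => by rw [← (key t).1, hD _ (key t).2]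

variable {M} in
/-- At a non-branching state an improvement strictly increases the reward. -/
theorem ImpStep.reward_lt [Fintype S] {π π' : S → A} (h : M.ImpStep π π') {z : S}
    (hz : M.NonBranching z) (hne : π' z ≠ π z) : M.R z (π z) < M.R z (π' z) := by
  obtain ⟨v, hv⟩ := hz
  have := h.2 z hne
  rw [V_eq_Q, Q, Q, hv, hv] at this
  linarith

variable {M} in
theorem ImpStep.reward_le [Fintype S] {π π' : S → A} (h : M.ImpStep π π') {z : S}
    (hz : M.NonBranching z) : M.R z (π z) ≤ M.R z (π' z) := by
  by_cases hne : π' z = π z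
  · rw [hne]
  · exact (h.reward_lt hz hne).le

end Values

section Labels

variable (a₀ : A)

/-- The action of `π` at `u`, with the choice at non-branching states forgotten. -/
noncomputable def choice (π : S → A) (u : S) : A := if M.NonBranching u then a₀ else π u

/-- The actions along the path of `π` from `u` inside `V`, up to the first state outside `V`. -/
noncomputable def label (π : S → A) : ℕ → Finset S → S → List A
  | 0, _, u => [M.choice a₀ π u]
  | m + 1, V, u => M.choice a₀ π u ::
      if M.T u (M.choice a₀ π u) ∈ V then
        label π m (V.erase (M.T u (M.choice a₀ π u))) (M.T u (M.choice a₀ π u))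
      else []

theorem T_choice (π : S → A) (u : S) : M.T u (M.choice a₀ π u) = M.T u (π u) := by
  unfold choice
  split_ifs with h
  · obtain ⟨v, hv⟩ := h
    rw [hv, hv]
  · rfl

/-- Equal labels force the two policies to agree on a closed set of states. -/
theorem exists_closed_of_label_eq {π π' : S → A} (hNB : ∀ z, M.NonBranching z → π z = π' z)
    (m : ℕ) : ∀ (V : Finset S) (u : S), #V ≤ m → u ∉ V →
      (∀ x ∉ V, x ≠ u → π x = π' x ∧ M.T x (π x) ∉ V) →
      M.label a₀ π m V u = M.label a₀ π' m V u →
      ∃ D : Set S, (∀ x ∉ V, x ∈ D) ∧ (∀ x ∈ D, M.T x (π x) ∈ D) ∧ ∀ x ∈ D, π x = π' x := by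
  have hchoice : ∀ u, M.choice a₀ π u = M.choice a₀ π' u → π u = π' u := by
    intro u hu
    by_cases h : M.NonBranching u
    · exact hNB u h
    · simpa [choice, h] using hu
  have hout : ∀ (V : Finset S) (u : S), π u = π' u → M.T u (π u) ∉ V →
      (∀ x ∉ V, x ≠ u → π x = π' x ∧ M.T x (π x) ∉ V) →
      ∃ D : Set S, (∀ x ∉ V, x ∈ D) ∧ (∀ x ∈ D, M.T x (π x) ∈ D) ∧ ∀ x ∈ D, π x = π' x := by
    intro V u hu hT hV
    refine ⟨{x | x ∉ V}, fun x hx => hx, fun x hx => ?_, fun x hx => ?_⟩ <;>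
      by_cases hxu : x = u
    · rw [hxu]; exact hT
    · exact (hV x hx hxu).2
    · rw [hxu]; exact hu
    · exact (hV x hx hxu).1
  induction m with
  | zero =>
    intro V u hm _ hV hlab
    simp only [label, List.cons.injEq, and_true] at hlab
    have : V = ∅ := card_eq_zero.1 (Nat.le_zero.1 hm)
    exact hout V u (hchoice u hlab) (by simp [this]) hV
  | succ m ih =>
    intro V u hm hu hV hlab
    simp only [label, List.cons.injEq] at hlab
    obtain ⟨hhead, htail⟩ := hlab
    have hπ := hchoice u hhead
    rw [← hhead, T_choice] at htail
    by_cases hv : M.T u (π u) ∈ V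
    · rw [if_pos hv, if_pos hv] at htail
      have hV' : ∀ x ∉ V.erase (M.T u (π u)), x ≠ M.T u (π u) →
          π x = π' x ∧ M.T x (π x) ∉ V.erase (M.T u (π u)) := by
        intro x hx hxv
        have hxV : x ∉ V := fun h => hx (mem_erase.2 ⟨hxv, h⟩)
        by_cases hxu : x = u
        · subst hxu; exact ⟨hπ, notMem_erase _ _⟩
        · exact ⟨(hV x hxV hxu).1, fun h => (hV x hxV hxu).2 (mem_of_mem_erase h)⟩
      obtain ⟨D, hD, hD'⟩ := ih (V.erase (M.T u (π u))) (M.T u (π u))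
        (by rw [card_erase_of_mem hv]; omega) (notMem_erase _ _) hV' htail
      exact ⟨D, fun x hx => hD x fun h => hx (mem_of_mem_erase h), hD'⟩
    · exact hout V u hπ hv hV

theorem V_eq_of_label_eq [Fintype S] {π π' : S → A}
    (hNB : ∀ z, M.NonBranching z → π z = π' z) {s : S}
    (h : M.label a₀ π (Fintype.card S) (univ.erase s) s =
      M.label a₀ π' (Fintype.card S) (univ.erase s) s) : M.V π s = M.V π' s := by
  obtain ⟨D, hD, hclosed, hagree⟩ := M.exists_closed_of_label_eq a₀ hNB _ _ s
    (card_le_univ _) (notMem_erase _ _) (by simp) h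
  exact M.V_congr hclosed hagree (hD s (notMem_erase _ _))

variable [Fintype A]

/-- The actions at `u` that `choice` can take. -/
noncomputable def acts (u : S) : Finset A := if M.NonBranching u then {a₀} else univ

theorem choice_mem_acts (π : S → A) (u : S) : M.choice a₀ π u ∈ M.acts a₀ u := by
  unfold choice acts; split_ifs <;> simp

/-- The possible labels. -/
noncomputable def labels : ℕ → Finset S → S → Finset (List A)
  | 0, _, u => (M.acts a₀ u).image fun a => [a]
  | m + 1, V, u => (M.acts a₀ u).biUnion fun a =>
      if M.T u a ∈ V then (labels m (V.erase (M.T u a)) (M.T u a)).image (List.cons a)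
      else {[a]}

theorem label_mem_labels (π : S → A) (m : ℕ) :
    ∀ (V : Finset S) (u : S), M.label a₀ π m V u ∈ M.labels a₀ m V u := by
  induction m with
  | zero => intro V u; simp [label, labels, choice_mem_acts]
  | succ m ih =>
    intro V u
    simp only [label, labels, mem_biUnion]
    refine ⟨_, M.choice_mem_acts a₀ π u, ?_⟩
    split_ifs with h
    · exact mem_image_of_mem _ (ih _ _)
    · simp

/-- The number of actions in `acts` leading from `u` to `v`. -/
noncomputable def edgeCount (u v : S) : ℝ := #((M.acts a₀ u).filter fun a => M.T u a = v)

theorem card_labels_le (m : ℕ) : ∀ (V : Finset S) (u : S), u ∉ V →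
    (#(M.labels a₀ m V u) : ℝ) ≤
      ∑ t ∈ insert u V, (#(M.acts a₀ t) : ℝ) * pathSum t (M.edgeCount a₀) m V u := by
  have hw : ∀ u v, 0 ≤ M.edgeCount a₀ u v := fun u v => Nat.cast_nonneg _
  induction m with
  | zero =>
    intro V u hu
    rw [sum_insert hu, pathSum_self, mul_one]
    have h1 : (#(M.labels a₀ 0 V u) : ℝ) ≤ #(M.acts a₀ u) := by
      exact_mod_cast card_image_le
    have h2 : 0 ≤ ∑ t ∈ V, (#(M.acts a₀ t) : ℝ) * pathSum t (M.edgeCount a₀) 0 V u :=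
      sum_nonneg fun t _ => mul_nonneg (Nat.cast_nonneg _) (pathSum_nonneg hw _ _ _)
    linarith
  | succ m ih =>
    intro V u hu
    rw [sum_insert hu, pathSum_self, mul_one]
    have h1 : (#(M.labels a₀ (m + 1) V u) : ℝ) ≤ ∑ a ∈ M.acts a₀ u,
        (1 + if M.T u a ∈ V then (#(M.labels a₀ m (V.erase (M.T u a)) (M.T u a)) : ℝ) else 0) := by
      have : #(M.labels a₀ (m + 1) V u) ≤ ∑ a ∈ M.acts a₀ u,
          (1 + if M.T u a ∈ V then #(M.labels a₀ m (V.erase (M.T u a)) (M.T u a)) else 0) := by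
        refine card_biUnion_le.trans (sum_le_sum fun a _ => ?_)
        split_ifs with h
        · exact card_image_le.trans (by omega)
        · simp
      exact_mod_cast this
    refine h1.trans ?_
    rw [sum_add_distrib, sum_const, nsmul_one]
    refine add_le_add le_rfl ?_
    have h2 : ∀ a ∈ M.acts a₀ u,
        (if M.T u a ∈ V then (#(M.labels a₀ m (V.erase (M.T u a)) (M.T u a)) : ℝ) else 0) =
        ∑ v ∈ V, if M.T u a = v then (#(M.labels a₀ m (V.erase v) v) : ℝ) else 0 := by
      intro a _
      rw [sum_ite_eq]
    rw [sum_congr rfl h2, sum_comm]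
    have h3 : ∀ t ∈ V, (#(M.acts a₀ t) : ℝ) * pathSum t (M.edgeCount a₀) (m + 1) V u =
        ∑ v ∈ V, M.edgeCount a₀ u v *
          ((#(M.acts a₀ t) : ℝ) * pathSum t (M.edgeCount a₀) m (V.erase v) v) := by
      intro t ht
      rw [pathSum_succ (show u ≠ t from fun h => hu (h ▸ ht)), mul_sum]
      exact sum_congr rfl fun _ _ => by ring
    rw [sum_congr rfl h3, sum_comm (s := V) (t := V)]
    refine sum_le_sum fun v hv => ?_
    rw [← sum_filter, sum_const, nsmul_eq_mul, ← mul_sum]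
    refine mul_le_mul_of_nonneg_left ?_ (Nat.cast_nonneg _)
    have := ih (V.erase v) v (notMem_erase _ _)
    rwa [insert_erase hv] at this

end Labels

end DMDP

theorem growth_alphaK {k : ℕ} (hk : 2 ≤ k) : Growth ((k : ℝ) - 1) (alphaK k) := by
  have hk' : (2 : ℝ) ≤ k := by exact_mod_cast hk
  have hs := Real.sq_sqrt (show 0 ≤ ((k : ℝ) - 1) ^ 2 + 4 by positivity)
  have h0 := Real.sqrt_nonneg (((k : ℝ) - 1) ^ 2 + 4)
  refine ⟨by linarith, ?_, ?_⟩ <;> unfold alphaK <;> nlinarith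

namespace DMDP

variable {S A : Type*} (M : DMDP S A)

section Count

variable [Fintype S] {ℓ : ℕ} {π : ℕ → S → A}

theorem le_sum_card_values (hS : 0 < Fintype.card S)
    (hchain : ∀ i, i + 1 < ℓ → M.PLt (π i) (π (i + 1))) :
    ℓ ≤ ∑ s, #(image (fun i => M.V (π i) s) (range ℓ)) := by
  obtain _ | ℓ := ℓ
  · simp
  suffices ∀ j ≤ ℓ, j + 1 ≤ ∑ s, #(image (fun i => M.V (π i) s) (range (j + 1))) from
    this ℓ le_rfl
  intro j
  induction j with
  | zero => intro _; simp; omega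
  | succ j ih =>
    intro hj
    obtain ⟨s, hs⟩ := (hchain j (by omega)).2
    refine (Nat.succ_le_succ (ih (by omega))).trans (Nat.succ_le_of_lt ?_)
    refine sum_lt_sum (fun s _ => card_image_range_succ_le _ j) ⟨s, mem_univ s, ?_⟩
    refine Nat.lt_of_succ_le (card_image_range_succ_of_lt (f := fun i => M.V (π i) s)
      (ρ := id) (fun i hi => ?_) hs).le
    exact (hchain i (by omega)).1 s

/-- The restriction of a policy to the non-branching states. -/
noncomputable def restrictNB (a₀ : A) (π : S → A) : S → A :=
  fun z => if M.NonBranching z then π z else a₀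

theorem card_restrictNB_le [Fintype A] (a₀ : A)
    (hstep : ∀ i, i + 1 < ℓ → M.ImpStep (π i) (π (i + 1))) :
    #(image (fun i => M.restrictNB a₀ (π i)) (range ℓ)) + #(univ.filter M.NonBranching) ≤
      1 + #(univ.filter M.NonBranching) * Fintype.card A := by
  obtain _ | ℓ := ℓ
  · have : Nonempty A := ⟨a₀⟩
    have : 1 ≤ Fintype.card A := Fintype.card_pos
    simp; nlinarith
  suffices ∀ j ≤ ℓ, #(image (fun i => M.restrictNB a₀ (π i)) (range (j + 1))) +
      #(univ.filter M.NonBranching) ≤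
      1 + ∑ z ∈ univ.filter M.NonBranching, #(image (fun i => π i z) (range (j + 1))) by
    refine (this ℓ le_rfl).trans (Nat.add_le_add_left ?_ 1)
    rw [← smul_eq_mul]
    exact sum_le_card_nsmul _ _ _ fun z _ => card_le_univ _
  intro j
  induction j with
  | zero => intro _; simp
  | succ j ih =>
    intro hj
    have ih := ih (by omega)
    change #(image _ (range (j + 2))) + _ ≤ 1 + ∑ z ∈ _, #(image _ (range (j + 2)))
    have hmono : ∀ z ∈ univ.filter M.NonBranching, #(image (fun i => π i z) (range (j + 1))) ≤
        #(image (fun i => π i z) (range (j + 2))) := fun z _ => card_image_range_succ_le _ j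
    by_cases heq : M.restrictNB a₀ (π (j + 1)) = M.restrictNB a₀ (π j)
    · have hmem : M.restrictNB a₀ (π (j + 1)) ∈
          image (fun i => M.restrictNB a₀ (π i)) (range (j + 1)) :=
        mem_image.2 ⟨j, by simp, heq.symm⟩
      rw [range_add_one (n := j + 1), image_insert, insert_eq_of_mem hmem,
        ← range_add_one (n := j + 1)]
      exact ih.trans (Nat.add_le_add_left (sum_le_sum hmono) 1)
    · obtain ⟨z, hz⟩ := Function.ne_iff.1 heq
      have hNB : M.NonBranching z := by
        by_contra h
        simp [restrictNB, h] at hz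
      simp only [restrictNB, hNB, if_true] at hz
      have hlt : ∑ z ∈ univ.filter M.NonBranching, #(image (fun i => π i z) (range (j + 1))) <
          ∑ z ∈ univ.filter M.NonBranching, #(image (fun i => π i z) (range (j + 2))) := by
        refine sum_lt_sum hmono ⟨z, by simp [hNB], ?_⟩
        refine Nat.lt_of_succ_le (card_image_range_succ_of_lt (f := fun i => π i z)
          (ρ := M.R z) (fun i hi => ?_) ?_).le
        · exact (hstep i (by omega)).reward_le hNB
        · exact (hstep j (by omega)).reward_lt hNB hz
      have hle : #(image (fun i => M.restrictNB a₀ (π i)) (range (j + 2))) ≤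
          #(image (fun i => M.restrictNB a₀ (π i)) (range (j + 1))) + 1 := by
        rw [range_add_one (n := j + 1), image_insert]
        exact card_insert_le _ _
      omega

theorem card_values_le [Fintype A] (a₀ : A) (s : S) :
    #(image (fun i => M.V (π i) s) (range ℓ)) ≤
      #(image (fun i => M.restrictNB a₀ (π i)) (range ℓ)) *
        #(M.labels a₀ (Fintype.card S) (univ.erase s) s) := by
  set F : ℕ → (S → A) × List A := fun i =>
    (M.restrictNB a₀ (π i), M.label a₀ (π i) (Fintype.card S) (univ.erase s) s) with hF
  have h1 : image F (range ℓ) ⊆ image (fun i => M.restrictNB a₀ (π i)) (range ℓ) ×ˢ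
      M.labels a₀ (Fintype.card S) (univ.erase s) s := by
    intro x hx
    obtain ⟨i, hi, rfl⟩ := mem_image.1 hx
    exact mem_product.2 ⟨mem_image_of_mem _ hi, M.label_mem_labels a₀ _ _ _ _⟩
  rw [← card_product]
  refine le_trans ?_ (card_le_card h1)
  have hfac : ∀ i j, F i = F j → M.V (π i) s = M.V (π j) s := by
    intro i j hij
    obtain ⟨hr, hlab⟩ := Prod.ext_iff.1 hij
    refine M.V_eq_of_label_eq a₀ (fun z hz => ?_) hlab
    have : M.restrictNB a₀ (π i) z = M.restrictNB a₀ (π j) z := congrFun hr z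
    simpa [restrictNB, hz] using this
  have : image (fun i => M.V (π i) s) (range ℓ) ⊆
      (image F (range ℓ)).image fun x => if h : ∃ i, F i = x then M.V (π h.choose) s else 0 := by
    intro x hx
    obtain ⟨i, hi, rfl⟩ := mem_image.1 hx
    refine mem_image.2 ⟨F i, mem_image_of_mem _ hi, ?_⟩
    have h : ∃ j, F j = F i := ⟨i, rfl⟩
    rw [dif_pos h]
    exact hfac _ _ h.choose_spec
  exact (card_le_card this).trans card_image_le

end Count

variable [Fintype A]

theorem edgeCount_of_nonBranching (a₀ : A) {z : S} (hz : M.NonBranching z) :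
    M.edgeCount a₀ z = Pi.single (M.T z a₀) 1 := by
  funext v
  simp only [edgeCount, acts, hz, if_true, filter_singleton, Pi.single_apply]
  by_cases h : M.T z a₀ = v
  · simp [h]
  · simp [h, Ne.symm h]

theorem sum_edgeCount [Fintype S] (a₀ : A) {z : S} (hz : ¬ M.NonBranching z) :
    ∑ v, M.edgeCount a₀ z v = Fintype.card A := by
  simp only [edgeCount, acts, hz, if_false]
  rw [← Nat.cast_sum, ← card_eq_sum_card_fiberwise (s := univ) (t := univ) (f := M.T z)
    (fun _ _ => mem_coe.2 (mem_univ _)), card_univ]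

theorem edgeCount_le (a₀ : A) {z : S} (hz : ¬ M.NonBranching z) (v : S) :
    M.edgeCount a₀ z v ≤ (Fintype.card A : ℝ) - 1 := by
  have : #((M.acts a₀ z).filter fun a => M.T z a = v) < Fintype.card A := by
    refine card_lt_univ_of_notMem (x := (not_forall.1 (fun h => hz ⟨v, h⟩)).choose) ?_
    simpa using fun _ => (not_forall.1 (fun h => hz ⟨v, h⟩)).choose_spec
  have : (#((M.acts a₀ z).filter fun a => M.T z a = v) : ℝ) + 1 ≤ Fintype.card A := by
    exact_mod_cast this
  unfold edgeCount
  linarith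

theorem card_labels_le_pow [Fintype S] (hS : 2 ≤ Fintype.card S) (hA : 2 ≤ Fintype.card A) (a₀ : A) (s : S)
    {α : ℝ} (g : Growth ((Fintype.card A : ℝ) - 1) α) :
    (#(M.labels a₀ (Fintype.card S) (univ.erase s) s) : ℝ) ≤ Fintype.card S *
      (Fintype.card A * (cL ((Fintype.card A : ℝ) - 1) α ^ #(univ.filter M.NonBranching) *
        α ^ #(univ.filter fun z => ¬ M.NonBranching z))) := by
  refine (M.card_labels_le a₀ _ _ s (notMem_erase _ _)).trans ?_
  rw [insert_erase (mem_univ s)]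
  have ha : (Fintype.card A : ℝ) - 1 = 1 ∨ 2 ≤ (Fintype.card A : ℝ) - 1 := by
    rcases hA.eq_or_lt with h | h
    · left; rw [← h]; norm_num
    · right
      have : (3 : ℝ) ≤ Fintype.card A := by exact_mod_cast h
      linarith
  rw [← nsmul_eq_mul]
  refine sum_le_card_nsmul _ _ _ fun t _ => ?_
  have := mul_pathSum_le g ha hS (w := M.edgeCount a₀) (NB := M.NonBranching)
    (fun u v => Nat.cast_nonneg _) (fun z hz => ⟨_, M.edgeCount_of_nonBranching a₀ hz⟩)
    (fun z hz => ⟨by rw [M.sum_edgeCount a₀ hz]; ring, M.edgeCount_le a₀ hz⟩) t s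
    (Fintype.card S)
  rw [sub_add_cancel] at this
  refine le_trans (le_of_eq ?_) this
  congr 1
  unfold acts
  split_ifs <;> simp

end DMDP

theorem stmt_14 {S A : Type*} [Fintype S] [Fintype A]
    (M : DMDP S A) (n k : ℕ) (hn : Fintype.card S = n) (hk : Fintype.card A = k)
    (hn2 : 2 ≤ n) (hk2 : 2 ≤ k)
    (ℓ : ℕ) (π : ℕ → S → A)
    (hchain : ∀ i, i + 1 < ℓ → M.PLt (π i) (π (i + 1)))
    (hstep : ∀ i, i + 1 < ℓ → M.ImpStep (π i) (π (i + 1))) :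
    (ℓ : ℝ) ≤ 5 * (n : ℝ) ^ 3 * (k : ℝ) ^ 2 * alphaK k ^ (n - 1) := by
  obtain ⟨a₀⟩ : Nonempty A := Fintype.card_pos_iff.1 (by omega)
  have g := growth_alphaK hk2
  set α := alphaK k with hα
  have h1 := M.le_sum_card_values (by omega) hchain
  have h2 := M.card_restrictNB_le a₀ hstep
  have h3 : ∀ s, (#(M.labels a₀ (Fintype.card S) (univ.erase s) s) : ℝ) ≤ _ := fun s =>
    M.card_labels_le_pow (by omega) (by omega) a₀ s (α := α) (by rw [hk]; exact g)
  set p := #(image (fun i => M.restrictNB a₀ (π i)) (range ℓ)) with hp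
  set b := #(univ.filter M.NonBranching) with hb
  set c := #(univ.filter fun z => ¬ M.NonBranching z) with hc
  have hbc : b + c = n := by
    rw [hb, hc, card_filter_add_card_filter_not, card_univ, hn]
  rw [hk] at h2 h3
  rw [hn] at h3
  set B := cL ((k : ℝ) - 1) α with hB
  have hℓ : (ℓ : ℝ) ≤ n * (p * (n * (k * (B ^ b * α ^ c)))) := by
    refine (Nat.cast_le.2 h1).trans ?_
    rw [Nat.cast_sum, ← hn, ← card_univ, ← nsmul_eq_mul]
    refine sum_le_card_nsmul _ _ _ fun s _ => ?_
    refine (Nat.cast_le.2 (M.card_values_le a₀ s)).trans ?_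
    rw [Nat.cast_mul, card_univ, hn]
    exact mul_le_mul_of_nonneg_left (hn ▸ h3 s) (Nat.cast_nonneg _)
  have hB1 := g.one_le_cL
  have hBα : B ≤ α := g.cL_le_cH.trans g.cH_le
  have hB2 : B ≤ 2 := g.cL_le_two
  have hα1 := g.one_lt
  have hαk : α ≤ k := by nlinarith [g.sq]
  have hn' : (2 : ℝ) ≤ n := by exact_mod_cast hn2
  have hk' : (2 : ℝ) ≤ k := by exact_mod_cast hk2
  have hX : 0 < α ^ (n - 1) := pow_pos g.pos _
  obtain ⟨n, rfl⟩ : ∃ m, n = m + 1 := ⟨n - 1, by omega⟩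
  rw [Nat.add_sub_cancel] at hX ⊢
  set N : ℝ := ((n + 1 : ℕ) : ℝ) with hN
  set X := α ^ n with hXd
  have hmain : (p : ℝ) * (B ^ b * α ^ c) ≤ 5 * N * k * X := by
    rcases Nat.eq_zero_or_pos b with h0 | hpos
    · have hcn : c = n + 1 := by omega
      have hp1 : (p : ℝ) ≤ 1 := by
        have : p ≤ 1 := by rw [h0] at h2; simpa using h2
        exact_mod_cast this
      rw [h0, hcn, pow_zero, one_mul, pow_succ, ← hXd]
      calc (p : ℝ) * (X * α) ≤ 1 * (X * k) :=
            mul_le_mul hp1 (mul_le_mul_of_nonneg_left hαk hX.le)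
              (mul_nonneg hX.le g.pos.le) zero_le_one
        _ = 1 * (k * X) := by ring
        _ ≤ (5 * N) * (k * X) := by
            refine mul_le_mul_of_nonneg_right (by linarith) (by positivity)
        _ = _ := by ring
    · have hpk : (p : ℝ) ≤ N * k := by
        have : p ≤ b * k := by omega
        have : p ≤ (n + 1) * k := this.trans (Nat.mul_le_mul_right k (by omega))
        rw [hN]
        exact_mod_cast this
      obtain ⟨b', hb'⟩ : ∃ m, b = m + 1 := ⟨b - 1, by omega⟩
      have hpow : B ^ b * α ^ c ≤ 2 * X := by
        have h4 : B ^ b' ≤ α ^ b' := pow_le_pow_left₀ (by linarith) hBα _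
        have hnc : n = b' + c := by omega
        rw [hb', hXd, hnc, pow_succ, pow_add]
        calc B ^ b' * B * α ^ c = B * (B ^ b' * α ^ c) := by ring
          _ ≤ 2 * (α ^ b' * α ^ c) :=
            mul_le_mul hB2 (mul_le_mul_of_nonneg_right h4 (by positivity)) (by positivity)
              zero_le_two
      calc (p : ℝ) * (B ^ b * α ^ c) ≤ N * k * (2 * X) :=
            mul_le_mul hpk hpow (by positivity) (by positivity)
        _ ≤ N * k * (5 * X) := by
            refine mul_le_mul_of_nonneg_left (by linarith) (by positivity)
        _ = _ := by ring
  calc (ℓ : ℝ) ≤ N * (p * (N * (k * (B ^ b * α ^ c)))) := hℓ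
    _ = N ^ 2 * k * (p * (B ^ b * α ^ c)) := by ring
    _ ≤ N ^ 2 * k * (5 * N * k * X) := mul_le_mul_of_nonneg_left hmain (by positivity)
    _ = _ := by ring
end

section
/- Any run of a policy iteration algorithm with max-gain action selection on an n-state, k-action DMDP (n ≥ 2, k ≥ 2) terminates in at most (n+1)·n²·k·((k+1)!)^((n−1)/(k+1)) steps. Equivalently, every sequence of policies π_1 ≺ π_2 ≺ … ≺ π_ℓ in which each π_{i+1} is obtained from π_i by policy improvement with max-gain action selection satisfies ℓ ≤ (n+1)·n²·k·((k+1)!)^((n−1)/(k+1)). -/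
open scoped Classical
open Finset

/-- Permutations `σ` with `σ x ∈ N x` for all `x`; their number is the permanent of the
`0`-`1` matrix whose rows are the indicators of the sets `N x`. -/
noncomputable def permsIn {α : Type*} [Fintype α] (N : α → Finset α) :
    Finset (Equiv.Perm α) :=
  univ.filter fun σ => ∀ x, σ x ∈ N x

/-- The logarithm of `(r!)^(1/r)`. -/
noncomputable def logFactorialMean (r : ℕ) : ℝ := Real.log (Nat.factorial r) / r

lemma mem_permsIn {α : Type*} [Fintype α] {N : α → Finset α} {σ : Equiv.Perm α} :
    σ ∈ permsIn N ↔ ∀ x, σ x ∈ N x := by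
  simp [permsIn]

lemma mul_logFactorialMean (r : ℕ) :
    (r : ℝ) * logFactorialMean r = Real.log (Nat.factorial r) := by
  rcases Nat.eq_zero_or_pos r with rfl | h
  · simp
  · have : (r : ℝ) ≠ 0 := by positivity
    unfold logFactorialMean
    field_simp

lemma logFactorialMean_one : logFactorialMean 1 = 0 := by
  simp [logFactorialMean]

lemma log_factorial_succ (r : ℕ) :
    Real.log (Nat.factorial (r + 1)) = Real.log (r + 1) + Real.log (Nat.factorial r) := by
  rw [Nat.factorial_succ, Nat.cast_mul, Real.log_mul (by positivity) (by positivity)]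
  push_cast
  rfl

lemma logFactorialMean_mono : Monotone logFactorialMean := by
  refine monotone_nat_of_le_succ fun r => ?_
  rcases Nat.eq_zero_or_pos r with rfl | h
  · simp [logFactorialMean]
  have hle : Real.log (Nat.factorial r) ≤ r * Real.log (r + 1) := by
    rw [← Real.log_pow]
    refine Real.log_le_log (by positivity) ?_
    calc (Nat.factorial r : ℝ) ≤ (r : ℝ) ^ r := by exact_mod_cast Nat.factorial_le_pow r
      _ ≤ ((r : ℝ) + 1) ^ r := by gcongr; linarith
  have hr : (0 : ℝ) < r := by positivity
  unfold logFactorialMean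
  rw [log_factorial_succ, div_le_div_iff₀ hr (by positivity)]
  push_cast
  nlinarith

lemma sum_mul_log_sum_le {ι : Type*} (s : Finset ι) (t : ι → ℝ) (ht : ∀ i ∈ s, 0 ≤ t i)
    (hT : 0 < ∑ i ∈ s, t i) :
    (∑ i ∈ s, t i) * Real.log (∑ i ∈ s, t i) ≤
      (∑ i ∈ s, t i) * Real.log s.card + ∑ i ∈ s, t i * Real.log (t i) := by
  have hs : s.Nonempty := by
    rw [Finset.nonempty_iff_ne_empty]
    rintro rfl
    simp at hT
  have hc : (0 : ℝ) < s.card := by exact_mod_cast hs.card_pos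
  have h := Real.convexOn_mul_log.map_sum_le (t := s) (w := fun _ => (s.card : ℝ)⁻¹) (p := t)
    (fun _ _ => by positivity) (by simp; field_simp) (fun i hi => ht i hi)
  simp only [smul_eq_mul, ← Finset.mul_sum] at h
  rw [Real.log_mul (by positivity) hT.ne', Real.log_inv, mul_assoc] at h
  have h' := le_of_mul_le_mul_left h (by positivity)
  linarith

lemma permsIn_restrict {α : Type*} [Fintype α] (N : α → Finset α) {i k : α} (hk : k ∈ N i) :
    permsIn (fun j => if j = i then {k} else (N j).erase k) =
      (permsIn N).filter fun σ => σ i = k := by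
  ext σ
  simp only [mem_permsIn, Finset.mem_filter]
  constructor
  · intro h
    have hi : σ i = k := by simpa using h i
    refine ⟨fun x => ?_, hi⟩
    by_cases hx : x = i
    · subst hx
      rwa [hi]
    · have := h x
      rw [if_neg hx] at this
      exact Finset.mem_of_mem_erase this
  · rintro ⟨h, hi⟩ x
    by_cases hx : x = i
    · subst hx
      simp [hi]
    · rw [if_neg hx, Finset.mem_erase]
      exact ⟨fun e => hx (σ.injective (e.trans hi.symm)), h x⟩

lemma sum_logFactorialMean_erase {α : Type*} [Fintype α] {N : α → Finset α} {I : Finset α}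
    (hdisj : ∀ i ∉ I, ∀ j ≠ i, Disjoint (N i) (N j)) {σ : Equiv.Perm α} (hσ : σ ∈ permsIn N)
    {j : α} (hj : j ∈ I) :
    ∑ i ∈ I.erase j, logFactorialMean ((N j).erase (σ i)).card =
      I.card * logFactorialMean (N j).card - Real.log (N j).card := by
  rw [mem_permsIn] at hσ
  have himg : ((I.erase j).filter fun i => σ i ∈ N j).image σ = (N j).erase (σ j) := by
    ext c
    simp only [Finset.mem_image, Finset.mem_filter, Finset.mem_erase]
    constructor
    · rintro ⟨i, ⟨⟨hij, -⟩, hi⟩, rfl⟩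
      exact ⟨fun e => hij (σ.injective e), hi⟩
    · rintro ⟨hne, hc⟩
      have hij : σ.symm c ≠ j := by
        rintro rfl
        simp at hne
      refine ⟨σ.symm c, ⟨⟨hij, ?_⟩, by simpa⟩, by simp⟩
      by_contra hI
      have h := hσ (σ.symm c)
      rw [Equiv.apply_symm_apply] at h
      exact Finset.disjoint_left.mp (hdisj _ hI j hij.symm) h hc
  have hcard : ((I.erase j).filter fun i => σ i ∈ N j).card + 1 = (N j).card := by
    rw [← Finset.card_image_of_injective _ σ.injective, himg,
      Finset.card_erase_add_one (hσ j)]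
  have hsplit := Finset.card_filter_add_card_filter_not (s := I.erase j) (fun i => σ i ∈ N j)
  have hI := Finset.card_erase_add_one hj
  set a := ((I.erase j).filter fun i => σ i ∈ N j).card with ha
  set b := ((I.erase j).filter fun i => ¬ σ i ∈ N j).card with hb
  rw [← Finset.sum_filter_add_sum_filter_not _ (fun i => σ i ∈ N j)]
  have h1 : ∑ i ∈ (I.erase j).filter (fun i => σ i ∈ N j),
      logFactorialMean ((N j).erase (σ i)).card = a * logFactorialMean a := by
    rw [ha, ← nsmul_eq_mul]
    refine Finset.sum_eq_card_nsmul fun i hi => ?_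
    rw [Finset.card_erase_of_mem (Finset.mem_filter.mp hi).2, ← hcard, Nat.add_sub_cancel]
  have h2 : ∑ i ∈ (I.erase j).filter (fun i => ¬ σ i ∈ N j),
      logFactorialMean ((N j).erase (σ i)).card = b * logFactorialMean (N j).card := by
    rw [hb, ← nsmul_eq_mul]
    refine Finset.sum_eq_card_nsmul fun i hi => ?_
    rw [Finset.erase_eq_of_notMem (Finset.mem_filter.mp hi).2]
  have hm : (I.card : ℝ) = b + (a + 1 : ℕ) := by
    rw [← hI, ← hsplit]
    push_cast
    ring
  rw [h1, h2, ← hcard, hm, add_mul, mul_logFactorialMean, mul_logFactorialMean,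
    log_factorial_succ]
  push_cast
  ring

/-- Bregman's bound on permanents, for a matrix which is a permutation matrix off the rows
in `I`. -/
lemma log_card_permsIn_le_sum {α : Type*} [Fintype α] (m : ℕ) :
    ∀ (I : Finset α) (N : α → Finset α), I.card = m → (∀ i ∉ I, (N i).card = 1) →
      (∀ i ∉ I, ∀ j ≠ i, Disjoint (N i) (N j)) → (permsIn N).Nonempty →
      Real.log (permsIn N).card ≤ ∑ i ∈ I, logFactorialMean (N i).card := by
  induction m with
  | zero =>
    intro I N hI h1 _ _
    obtain rfl := Finset.card_eq_zero.mp hI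
    have : (permsIn N).card ≤ 1 := by
      refine Finset.card_le_one.mpr fun σ hσ τ hτ => Equiv.ext fun x => ?_
      rw [mem_permsIn] at hσ hτ
      exact Finset.card_le_one.mp (h1 x (by simp)).le _ (hσ x) _ (hτ x)
    simpa using Real.log_nonpos (by positivity) (by exact_mod_cast this)
  | succ m ih =>
    intro I N hI h1 hdisj hne
    have hP : (0 : ℝ) < (permsIn N).card := by exact_mod_cast hne.card_pos
    have hrow : ∀ i ∈ I, ((permsIn N).card : ℝ) * Real.log (permsIn N).card ≤
        (permsIn N).card * Real.log (N i).card + ∑ σ ∈ permsIn N,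
          ∑ j ∈ I.erase i, logFactorialMean ((N j).erase (σ i)).card := by
      intro i hi
      have hmaps : ∀ σ ∈ permsIn N, σ i ∈ N i := fun σ hσ => mem_permsIn.mp hσ i
      have hsum : ((permsIn N).card : ℝ) =
          ∑ k ∈ N i, (((permsIn N).filter fun σ => σ i = k).card : ℝ) := by
        exact_mod_cast Finset.card_eq_sum_card_fiberwise (f := fun σ : Equiv.Perm α => σ i) hmaps
      have hjensen := sum_mul_log_sum_le (N i)
        (fun k => (((permsIn N).filter fun σ => σ i = k).card : ℝ))
        (fun _ _ => by positivity) (by rw [← hsum]; exact hP)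
      rw [← hsum] at hjensen
      refine hjensen.trans (add_le_add le_rfl ?_)
      rw [← Finset.sum_fiberwise_of_maps_to hmaps]
      refine Finset.sum_le_sum fun k hk => ?_
      have hconst : ∑ σ ∈ (permsIn N).filter (fun σ => σ i = k),
          ∑ j ∈ I.erase i, logFactorialMean ((N j).erase (σ i)).card =
          ((permsIn N).filter fun σ => σ i = k).card *
            ∑ j ∈ I.erase i, logFactorialMean ((N j).erase k).card := by
        rw [← nsmul_eq_mul]
        refine Finset.sum_eq_card_nsmul fun σ hσ => ?_
        rw [(Finset.mem_filter.mp hσ).2]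
      rw [hconst]
      rcases ((permsIn N).filter fun σ => σ i = k).eq_empty_or_nonempty with he | hne'
      · simp [he]
      refine mul_le_mul_of_nonneg_left ?_ (by positivity)
      rw [← permsIn_restrict N hk] at hne' ⊢
      have hkN : ∀ j ∉ I, j ≠ i → k ∉ N j := fun j hj hji hkj =>
        Finset.disjoint_left.mp (hdisj j hj i hji.symm) hkj hk
      refine (ih (I.erase i) _ (by rw [Finset.card_erase_of_mem hi, hI]; rfl) ?_ ?_ hne').trans ?_
      · intro j hj
        by_cases hji : j = i
        · simp [hji]
        · have hjI : j ∉ I := fun h => hj (Finset.mem_erase.mpr ⟨hji, h⟩)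
          simp only [if_neg hji]
          rw [Finset.erase_eq_of_notMem (hkN j hjI hji), h1 j hjI]
      · intro j hj l hl
        by_cases hji : j = i
        · subst hji
          simp [hl]
        · have hjI : j ∉ I := fun h => hj (Finset.mem_erase.mpr ⟨hji, h⟩)
          by_cases hli : l = i
          · subst hli
            simp [hji]
          · simp only [if_neg hji, if_neg hli]
            exact (hdisj j hjI l hl).mono (Finset.erase_subset _ _) (Finset.erase_subset _ _)
      · refine (Finset.sum_congr rfl fun j hj => ?_).le
        rw [if_neg (Finset.ne_of_mem_erase hj)]
    have htotal := Finset.sum_le_sum hrow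
    rw [Finset.sum_const, nsmul_eq_mul, Finset.sum_add_distrib, Finset.sum_comm (s := I),
      ← Finset.mul_sum] at htotal
    have hswap : ∀ σ ∈ permsIn N, ∑ i ∈ I, ∑ j ∈ I.erase i,
        logFactorialMean ((N j).erase (σ i)).card =
        ∑ j ∈ I, (I.card * logFactorialMean (N j).card - Real.log (N j).card) := by
      intro σ hσ
      rw [Finset.sum_comm' (t' := I) (s' := fun j => I.erase j)
        (by intro x y; simp only [Finset.mem_erase]; tauto)]
      exact Finset.sum_congr rfl fun j hj => sum_logFactorialMean_erase hdisj hσ hj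
    rw [Finset.sum_congr rfl hswap, Finset.sum_const, nsmul_eq_mul, ← mul_add,
      ← Finset.sum_add_distrib] at htotal
    simp only [add_sub_cancel] at htotal
    rw [← Finset.mul_sum, mul_left_comm] at htotal
    have hIpos : (0 : ℝ) < I.card := by rw [hI]; positivity
    exact le_of_mul_le_mul_left (le_of_mul_le_mul_left htotal hP) hIpos

lemma card_permsIn_le_factorial_rpow {α : Type*} [Fintype α] (N : α → Finset α) (d : ℕ) (u : α)
    (hu : (N u).card = 1) (hN : ∀ x, (N x).card ≤ d) :
    ((permsIn N).card : ℝ) ≤ (Nat.factorial d : ℝ) ^ (((Fintype.card α : ℝ) - 1) / d) := by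
  rcases (permsIn N).eq_empty_or_nonempty with he | hne
  · rw [he]
    simp only [Finset.card_empty, Nat.cast_zero]
    positivity
  have hlog := log_card_permsIn_le_sum _ univ N rfl (by simp) (by simp) hne
  have hP : (0 : ℝ) < (permsIn N).card := by exact_mod_cast hne.card_pos
  rw [← Real.log_le_log_iff hP (by positivity), Real.log_rpow (by positivity)]
  refine hlog.trans ?_
  rw [← Finset.add_sum_erase _ _ (Finset.mem_univ u), hu, logFactorialMean_one, zero_add]
  refine (Finset.sum_le_card_nsmul _ _ (logFactorialMean d)
    fun x _ => logFactorialMean_mono (hN x)).trans (le_of_eq ?_)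
  have hc : ((univ.erase u).card : ℝ) = Fintype.card α - 1 := by
    rw [Finset.card_erase_of_mem (Finset.mem_univ u), Finset.card_univ,
      Nat.cast_pred (Fintype.card_pos_iff.mpr ⟨u⟩)]
  rw [nsmul_eq_mul, hc, logFactorialMean]
  ring

/-- The orbit of `s` under `f` follows a permutation that closes the initial simple path of the
orbit into a cycle, except at the end point `u` of this path. -/
lemma exists_perm_following_orbit {α : Type*} [Finite α] (f : α → α) (s : α) :
    ∃ (u : α) (σ : Equiv.Perm α), σ u = s ∧ (∀ x, σ x = x ∨ σ x = f x ∨ x = u) ∧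
      ∀ t, f^[t] s = (fun x => if x = u then f u else σ x)^[t] s := by
  have hex : ∃ t, ∃ t' < t, f^[t'] s = f^[t] s := by
    obtain ⟨a, b, hab, h⟩ := Finite.exists_ne_map_eq_of_infinite fun t : ℕ => f^[t] s
    rcases lt_or_gt_of_ne hab with h' | h'
    · exact ⟨b, a, h', h⟩
    · exact ⟨a, b, h', h.symm⟩
  obtain ⟨m, hm⟩ : ∃ m, Nat.find hex = m + 1 := by
    refine Nat.exists_eq_succ_of_ne_zero fun h => ?_
    obtain ⟨t', ht', -⟩ := Nat.find_spec hex
    omega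
  obtain ⟨p, hp, hpe⟩ := Nat.find_spec hex
  rw [hm] at hp hpe
  have hmin : ∀ a b, a < b → b ≤ m → f^[a] s ≠ f^[b] s := fun a b hab hb h =>
    Nat.find_min hex (m := b) (by omega) ⟨a, hab, h⟩
  set l := (List.range (m + 1)).map fun i => f^[i] s with hl
  have hlen : l.length = m + 1 := by simp [hl]
  have hget : ∀ i (hi : i < l.length), l[i] = f^[i] s := by
    intro i hi
    simp only [hl, List.getElem_map, List.getElem_range]
  have hnodup : l.Nodup := by
    rw [hl, List.nodup_map_iff_inj_on List.nodup_range]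
    intro a ha b hb h
    rw [List.mem_range] at ha hb
    rcases lt_trichotomy a b with h' | h' | h'
    · exact absurd h (hmin a b h' (by omega))
    · exact h'
    · exact absurd h.symm (hmin b a h' (by omega))
  have hlast : l.formPerm (f^[m] s) = s := by
    have h := List.formPerm_apply_getElem l hnodup m (by omega)
    rw [hget, hget] at h
    simpa [hlen] using h
  have hstep : ∀ i < m, l.formPerm (f^[i] s) = f (f^[i] s) := by
    intro i hi
    have h := List.formPerm_apply_getElem l hnodup i (by omega)
    rw [hget, hget] at h
    rw [h, hlen, Nat.mod_eq_of_lt (by omega), Function.iterate_succ_apply']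
  have hmem : ∀ t, ∃ i ≤ m, f^[t] s = f^[i] s := by
    intro t
    induction t with
    | zero => exact ⟨0, by omega, rfl⟩
    | succ t ih =>
      obtain ⟨i, hi, he⟩ := ih
      rw [Function.iterate_succ_apply', he, ← Function.iterate_succ_apply' f]
      rcases hi.lt_or_eq with h | rfl
      · exact ⟨i + 1, h, rfl⟩
      · exact ⟨p, by omega, hpe.symm⟩
  refine ⟨f^[m] s, l.formPerm, hlast, fun x => ?_, fun t => ?_⟩
  · by_cases hx : x ∈ l
    · right
      obtain ⟨i, hi, rfl⟩ := List.mem_map.mp hx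
      rw [List.mem_range] at hi
      rcases (Nat.lt_succ_iff.mp hi).lt_or_eq with h | rfl
      · exact Or.inl (hstep i h)
      · exact Or.inr rfl
    · exact Or.inl (List.formPerm_apply_of_notMem hx)
  · induction t with
    | zero => rfl
    | succ t ih =>
      rw [Function.iterate_succ_apply', Function.iterate_succ_apply', ← ih]
      split_ifs with h
      · rw [h]
      · obtain ⟨i, hi, he⟩ := hmem t
        have him : i < m := lt_of_le_of_ne hi (by rintro rfl; exact h he)
        rw [he, hstep i him]

namespace DMDP

lemma V_congr_s17 {S A : Type*} (M : DMDP S A) {π π' : S → A} {s : S}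
    (htraj : ∀ t, M.traj π s t = M.traj π' s t)
    (hR : ∀ x, M.T x (π x) = M.T x (π' x) → M.R x (π x) = M.R x (π' x)) :
    M.V π s = M.V π' s := by
  refine tsum_congr fun t => ?_
  rw [hR, htraj t]
  have h := htraj (t + 1)
  simp only [traj, Function.iterate_succ_apply'] at h htraj ⊢
  rwa [← htraj t] at h

lemma MaxGainStep.reward_le {S A : Type*} {M : DMDP S A} {π π' : S → A}
    (h : M.MaxGainStep π π') {s : S} (hs : π' s ≠ π s) {a : A}
    (ha : M.T s a = M.T s (π' s)) : M.R s a ≤ M.R s (π' s) := by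
  obtain ⟨himp, hmax⟩ := h.2 s hs
  by_contra! hlt
  have hQ : M.Q π s (π' s) < M.Q π s a := by
    unfold Q
    rw [ha]
    linarith
  exact absurd (hmax a (himp.trans hQ)) (not_le.mpr hQ)

/-- The states at which none of the policies `π 1, …, π i` deviates from `π 0`. -/
noncomputable def unswitched {S A : Type*} [Fintype S] (π : ℕ → S → A) (i : ℕ) : Finset S :=
  univ.filter fun x => ∀ j ≤ i, π j x = π 0 x

lemma mem_unswitched {S A : Type*} [Fintype S] {π : ℕ → S → A} {i : ℕ} {x : S} :
    x ∈ unswitched π i ↔ ∀ j ≤ i, π j x = π 0 x := by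
  simp [unswitched]

lemma unswitched_antitone {S A : Type*} [Fintype S] (π : ℕ → S → A) :
    Antitone (unswitched π) := fun _ _ hij _ hx =>
  mem_unswitched.mpr fun l hl => mem_unswitched.mp hx l (hl.trans hij)

lemma reward_le_of_notMem_unswitched {S A : Type*} [Fintype S] {M : DMDP S A} {ℓ : ℕ}
    {π : ℕ → S → A} (hstep : ∀ i, i + 1 < ℓ → M.MaxGainStep (π i) (π (i + 1))) {i : ℕ}
    (hi : i < ℓ) {x : S} (hx : x ∉ unswitched π i) {a : A}
    (ha : M.T x a = M.T x (π i x)) : M.R x a ≤ M.R x (π i x) := by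
  induction i with
  | zero =>
    refine absurd (mem_unswitched.mpr fun j hj => ?_) hx
    rw [Nat.le_zero.mp hj]
  | succ i ih =>
    by_cases h : π (i + 1) x = π i x
    · rw [h] at ha ⊢
      refine ih (by omega) (fun hmem => hx ?_) ha
      rw [mem_unswitched] at hmem ⊢
      intro j hj
      rcases Nat.le_succ_iff.mp hj with hj | rfl
      · exact hmem j hj
      · exact h.trans (hmem i le_rfl)
    · exact (hstep i hi).reward_le h ha

lemma reward_eq_of_unswitched_eq {S A : Type*} [Fintype S] {M : DMDP S A} {ℓ : ℕ}
    {π : ℕ → S → A} (hstep : ∀ i, i + 1 < ℓ → M.MaxGainStep (π i) (π (i + 1))) {i j : ℕ}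
    (hi : i < ℓ) (hj : j < ℓ) (hU : unswitched π i = unswitched π j) {x : S}
    (hT : M.T x (π i x) = M.T x (π j x)) : M.R x (π i x) = M.R x (π j x) := by
  by_cases hx : x ∈ unswitched π i
  · have hx' := hx
    rw [hU] at hx'
    rw [mem_unswitched.mp hx i le_rfl, mem_unswitched.mp hx' j le_rfl]
  · refine le_antisymm ?_ ?_
    · exact reward_le_of_notMem_unswitched hstep hj (hU ▸ hx) hT
    · exact reward_le_of_notMem_unswitched hstep hi hx hT.symm

lemma V_le_of_chain {S A : Type*} {M : DMDP S A} {ℓ : ℕ} {π : ℕ → S → A}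
    (hchain : ∀ i, i + 1 < ℓ → M.PLt (π i) (π (i + 1))) {i j : ℕ} (hij : i ≤ j) (hj : j < ℓ)
    (s : S) : M.V (π i) s ≤ M.V (π j) s := by
  induction j, hij using Nat.le_induction with
  | base => exact le_rfl
  | succ j _ ih => exact (ih (by omega)).trans ((hchain j hj).1 s)

/-- Successor sets of the graph of `M` with a self-loop added everywhere, and with `u` having
`s` as its only successor. -/
noncomputable def closingSuccessors {S A : Type*} [Fintype A] (M : DMDP S A) (s u x : S) :
    Finset S :=
  if x = u then {s} else insert x (univ.image (M.T x))

lemma card_permsIn_closingSuccessors_le {S A : Type*} [Fintype S] [Fintype A] (M : DMDP S A)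
    (s u : S) :
    ((permsIn (M.closingSuccessors s u)).card : ℝ) ≤ (Nat.factorial (Fintype.card A + 1) : ℝ) ^
      (((Fintype.card S : ℝ) - 1) / ((Fintype.card A : ℝ) + 1)) := by
  have h := card_permsIn_le_factorial_rpow (M.closingSuccessors s u) (Fintype.card A + 1) u
    (by simp [closingSuccessors]) fun x => by
      unfold closingSuccessors
      split_ifs
      · simp
      · exact (Finset.card_insert_le _ _).trans (Nat.succ_le_succ Finset.card_image_le)
  exact_mod_cast h

lemma exists_perm_determining_traj {S A : Type*} [Fintype S] [Fintype A] (M : DMDP S A)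
    (π : S → A) (s : S) :
    ∃ (u : S) (σ : Equiv.Perm S), σ ∈ permsIn (M.closingSuccessors s u) ∧
      ∀ t, M.traj π s t = (fun x => if x = u then M.T u (π u) else σ x)^[t] s := by
  obtain ⟨u, σ, hu, hσ, ht⟩ := exists_perm_following_orbit (fun x => M.T x (π x)) s
  refine ⟨u, σ, mem_permsIn.mpr fun x => ?_, ht⟩
  unfold closingSuccessors
  split_ifs with hx
  · simp [hx, hu]
  · rcases hσ x with h | h | h
    · simp [h]
    · simp [h]
    · exact absurd h hx

end DMDP

theorem stmt_17 {S A : Type*} [Fintype S] [Fintype A]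
    (M : DMDP S A) (n k : ℕ) (hn : Fintype.card S = n) (hk : Fintype.card A = k)
    (hn2 : 2 ≤ n) (hk2 : 2 ≤ k)
    (ℓ : ℕ) (π : ℕ → S → A)
    (hchain : ∀ i, i + 1 < ℓ → M.PLt (π i) (π (i + 1)))
    (hstep : ∀ i, i + 1 < ℓ → M.MaxGainStep (π i) (π (i + 1))) :
    (ℓ : ℝ) ≤ ((n : ℝ) + 1) * (n : ℝ) ^ 2 * (k : ℝ) *
      (Nat.factorial (k + 1) : ℝ) ^ (((n : ℝ) - 1) / ((k : ℝ) + 1)) := by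
  subst hn hk
  rcases Nat.eq_zero_or_pos ℓ with rfl | hℓ
  · simp only [Nat.cast_zero]
    positivity
  have hS : Nonempty S := Fintype.card_pos_iff.mp (by omega)
  have hstrict : ∀ i, ∃ s, i + 1 < ℓ → M.V (π i) s < M.V (π (i + 1)) s := by
    intro i
    by_cases h : i + 1 < ℓ
    · obtain ⟨s, hs⟩ := (hchain i h).2
      exact ⟨s, fun _ => hs⟩
    · exact ⟨hS.some, fun h' => absurd h' h⟩
  choose s hs using hstrict
  choose u σ hσ htraj using fun i => M.exists_perm_determining_traj (π i) (s i)
  let code : ℕ → Σ _ : ℕ × S × S × A, Equiv.Perm S := fun i =>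
    ⟨((DMDP.unswitched π i).card, s i, u i, π i (u i)), σ i⟩
  let codes : Finset (Σ _ : ℕ × S × S × A, Equiv.Perm S) :=
    (Finset.range (Fintype.card S + 1) ×ˢ univ).sigma
      fun c => permsIn (M.closingSuccessors c.2.1 c.2.2.1)
  have hmaps : ∀ i ∈ Finset.range ℓ, code i ∈ codes := by
    intro i _
    simp only [code, codes, Finset.mem_sigma, Finset.mem_product, Finset.mem_range,
      Finset.mem_univ, and_true]
    exact ⟨Nat.lt_succ_of_le (Finset.card_le_univ _), hσ i⟩
  have hne : ∀ i j, i < j → j < ℓ → code i ≠ code j := by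
    intro i j hij hj heq
    simp only [code, Sigma.mk.injEq, Prod.mk.injEq, heq_eq_eq] at heq
    obtain ⟨⟨hc, hs', hu, ha⟩, hp⟩ := heq
    have hU : DMDP.unswitched π i = DMDP.unswitched π j :=
      (Finset.eq_of_subset_of_card_le (DMDP.unswitched_antitone π hij.le) hc.le).symm
    have hV : M.V (π i) (s i) = M.V (π j) (s i) := by
      refine M.V_congr_s17 (fun t => ?_)
        fun x hx => DMDP.reward_eq_of_unswitched_eq hstep (by omega) hj hU hx
      have hj' := htraj j t
      rw [← hs', ← ha, ← hu, ← hp] at hj'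
      rw [htraj i t, hj']
    have h1 := hs i (by omega)
    have h2 := DMDP.V_le_of_chain hchain (i := i + 1) hij hj (s i)
    linarith
  have hinj : Set.InjOn code (Finset.range ℓ) := by
    intro i hi j hj heq
    simp only [Finset.coe_range, Set.mem_Iio] at hi hj
    rcases lt_trichotomy i j with h | h | h
    · exact absurd heq (hne i j h hj)
    · exact h
    · exact absurd heq.symm (hne j i h hi)
  have hle := Finset.card_le_card_of_injOn code hmaps hinj
  rw [Finset.card_range, Finset.card_sigma] at hle
  calc (ℓ : ℝ) ≤ ∑ c ∈ Finset.range (Fintype.card S + 1) ×ˢ (univ : Finset (S × S × A)),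
        ((permsIn (M.closingSuccessors c.2.1 c.2.2.1)).card : ℝ) := by exact_mod_cast hle
    _ ≤ _ := Finset.sum_le_card_nsmul _ _ _
        fun c _ => M.card_permsIn_closingSuccessors_le c.2.1 c.2.2.1
    _ = _ := by
      rw [Finset.card_product, Finset.card_range, Finset.card_univ, Fintype.card_prod,
        Fintype.card_prod, nsmul_eq_mul]
      push_cast
      ring
end
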